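/- arXiv:2204.09887 — 2 statements merged into one kernel-verified Lean document; each statement's English description precedes it below -/
import Mathlib

section
/- Let ν ∈ ℂ with Re(ν) > −1, and let α, β ∈ ℂ with Re(√α) > Re(√β) > 0. Then Σ_{n=1}^∞ τ(n) I_{ν+1}(π√n(√α−√β)) K_{ν+1}(π√n(√α+√β)) = (2(2π)^{−12} Γ(ν+13)/Γ(ν+2)) Σ_{n=1}^∞ [ τ(n)/(√(4n+α)√(4n+β)) · ((√(4n+α)−√(4n+β))/(√(4n+α)+√(4n+β)))^{ν+1} · (1/√(4n+α) + 1/√(4n+β))^{22} · ₂F₁(ν−10, −11; ν+2; ((√(4n+α)−√(4n+β))/(√(4n+α)+√(4n+β)))²) ]. -/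
open scoped Real

noncomputable def besselK (ν z : ℂ) : ℂ :=
  ∫ t in Set.Ioi (0:ℝ), Complex.exp (-z * Real.cosh t) * Complex.cosh (ν * t)

noncomputable def besselI (ν z : ℂ) : ℂ :=
  ∑' m : ℕ, (z / 2) ^ (ν + 2 * (m : ℂ)) / ((m.factorial : ℂ) * Complex.Gamma (ν + m + 1))

/-- Principal branch complex square root. -/
noncomputable def csqrt (z : ℂ) : ℂ := z ^ ((1 : ℂ)/2)

/-- Gauss hypergeometric series ₂F₁(a,b;c;z). -/
noncomputable def hyp2F1 (a b c z : ℂ) : ℂ :=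
  ∑' m : ℕ, ((ascPochhammer ℂ m).eval a * (ascPochhammer ℂ m).eval b) /
    ((ascPochhammer ℂ m).eval c * (m.factorial : ℂ)) * z ^ m

/-- `IsRamanujanTau τ` states that `τ` (indexed by `n ≥ 1`) satisfies the defining product
expansion `q ∏ (1 - q^m)^24 = ∑ τ(n) q^n` for `|q| < 1`. -/
def IsRamanujanTau (τ : ℕ → ℂ) : Prop :=
  ∀ q : ℂ, ‖q‖ < 1 → ∑' n : ℕ, τ (n + 1) * q ^ (n + 1) = q * ∏' m : ℕ, (1 - q ^ (m + 1)) ^ 24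

/-!
A product `I_μ K_μ` is the Laplace-type integral
`2 I_μ(s (a - b)) K_μ(s (a + b)) = ∫ exp (-s² / (2 v) - (a² + b²) v) I_μ((a² - b²) v) dv / v`
over `v > 0`. For `s = π √n` the modular relation of the generating series of `τ` turns the sum over
`n` of `τ(n) exp (-π² n / (2 v)) / v` into a multiple of `v ^ 11` times the sum of
`τ(n) exp (-8 n v)`, and the remaining integrals are Laplace transforms of `v ^ 11 I_μ`, which
Euler's transformation turns into terminating hypergeometric series in
`((A - B) / (A + B))²` with `A² = 4 n + a²`, `B² = 4 n + b²`.

The two integral evaluations, obtained by integrating power series termwise, need `a < 2 b` for real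
`a` and `b`; analytic continuation, first in `a` and then in `b`, gives the general case.
-/

open Set MeasureTheory Filter
open scoped Nat Topology

/-- A sequence, indexed by `n ≥ 1`, whose Dirichlet series converges absolutely at `k` and whose
generating series transforms under `y ↦ 1 / y` like a cusp form of weight `k + 1` and sign `ε`
restricted to the imaginary axis. -/
structure IsModularSequence (k : ℕ) (ε : ℂ) (c : ℕ → ℂ) : Prop where
  summable_norm_div : Summable fun n : ℕ => ‖c (n + 1)‖ / ((n : ℝ) + 1) ^ k
  tsum_exp_inv : ∀ y : ℝ, 0 < y →
    ∑' n : ℕ, c (n + 1) * (Real.exp (-(2 * π * (n + 1) / y)) : ℂ) =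
      ε * (y : ℂ) ^ (k + 1) * ∑' n : ℕ, c (n + 1) * (Real.exp (-(2 * π * (n + 1) * y)) : ℂ)

namespace IsRamanujanTau

variable {τ : ℕ → ℂ}

theorem hasSum_discriminant (hτ : IsRamanujanTau τ) (z : UpperHalfPlane) :
    HasSum (fun n : ℕ => τ (n + 1) * Function.Periodic.qParam 1 (z : ℂ) ^ (n + 1))
      (ModularForm.discriminant z) := by
  have h := hτ _ (Function.Periodic.norm_qParam_lt_one one_pos z.im_pos)
  rw [← ModularForm.discriminant_eq_q_prod] at h
  have hs : Summable fun n : ℕ => τ (n + 1) * Function.Periodic.qParam 1 (z : ℂ) ^ (n + 1) := by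
    by_contra hc
    exact ModularForm.discriminant_ne_zero z (h.symm.trans (tsum_eq_zero_of_not_summable hc))
  exact h ▸ hs.hasSum

theorem coeff_qExpansion_discriminant (hτ : IsRamanujanTau τ) (n : ℕ) :
    (UpperHalfPlane.qExpansion 1 CuspForm.discriminant).coeff (n + 1) = τ (n + 1) := by
  let c : ℕ → ℂ := fun n => if n = 0 then 0 else τ n
  have hc : ∀ n, c n = (UpperHalfPlane.qExpansion 1 CuspForm.discriminant).coeff n := by
    apply ModularFormClass.qExpansion_coeff_unique (Γ := MonoidHom.range _) (k := 12) one_pos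
      one_mem_strictPeriods_SL
    intro z
    rw [← hasSum_nat_add_iff' 1]
    simpa [c] using hτ.hasSum_discriminant z
  exact (hc (n + 1)).symm.trans (if_neg n.succ_ne_zero)

theorem exists_norm_le (hτ : IsRamanujanTau τ) :
    ∃ C : ℝ, ∀ n : ℕ, ‖τ (n + 1)‖ ≤ C * ((n : ℝ) + 1) ^ 6 := by
  have hO := CuspFormClass.qExpansion_isBigO (Γ := MonoidHom.range _) (k := 12)
    CuspForm.discriminant
  rw [Subgroup.strictWidthInfty_SL2Z] at hO
  obtain ⟨C, -, h⟩ := Asymptotics.bound_of_isBigO_nat_atTop hO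
  refine ⟨C, fun n => ?_⟩
  have hn := @h (n + 1) (by positivity)
  rwa [hτ.coeff_qExpansion_discriminant, show ((12 : ℤ) : ℝ) / 2 = (6 : ℕ) by norm_num,
    Real.rpow_natCast, Real.norm_of_nonneg (by positivity), Nat.cast_succ] at hn

theorem hasSum_exp (hτ : IsRamanujanTau τ) {y : ℝ} {z : UpperHalfPlane}
    (hz : (z : ℂ) = Complex.I * y) :
    HasSum (fun n : ℕ => τ (n + 1) * (Real.exp (-(2 * π * (n + 1) * y)) : ℂ))
      (ModularForm.discriminant z) := by
  convert hτ.hasSum_discriminant z using 3 with n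
  rw [Function.Periodic.qParam, ← Complex.exp_nat_mul, hz, Complex.ofReal_exp]
  congr 1
  push_cast
  linear_combination -(2 * (π : ℂ) * (n + 1) * y) * Complex.I_sq

end IsRamanujanTau

theorem discriminant_modular_S_smul (z : UpperHalfPlane) :
    ModularForm.discriminant (ModularGroup.S • z) =
      (z : ℂ) ^ 12 * ModularForm.discriminant z := by
  have h := congrFun ModularForm.discriminant_S_invariant z
  rw [ModularForm.SL_slash_apply, ModularGroup.denom_S, zpow_neg,
    mul_inv_eq_iff_eq_mul₀ (zpow_ne_zero _ (UpperHalfPlane.ne_zero z)), mul_comm] at h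
  exact_mod_cast h

theorem IsRamanujanTau.isModularSequence {τ : ℕ → ℂ} (hτ : IsRamanujanTau τ) :
    IsModularSequence 11 1 τ where
  summable_norm_div := by
    obtain ⟨C, hC⟩ := hτ.exists_norm_le
    have hs : Summable fun n : ℕ => C * (((n + 1 : ℕ) : ℝ) ^ 5)⁻¹ :=
      ((summable_nat_add_iff 1).mpr (Real.summable_nat_pow_inv.mpr (by norm_num))).mul_left C
    refine .of_nonneg_of_le (fun n => by positivity) (fun n => ?_) hs
    rw [Nat.cast_succ, div_le_iff₀ (by positivity)]
    exact (hC n).trans_eq (by field_simp)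
  tsum_exp_inv y hy := by
    let z : UpperHalfPlane := ⟨Complex.I * y, by simpa using hy⟩
    have hS : ((ModularGroup.S • z : UpperHalfPlane) : ℂ) = Complex.I * (y⁻¹ : ℝ) := by
      rw [UpperHalfPlane.modular_S_smul]
      change (-(Complex.I * y))⁻¹ = _
      simp [mul_comm]
    have h := discriminant_modular_S_smul z
    rw [← (hτ.hasSum_exp hS).tsum_eq, ← (hτ.hasSum_exp rfl).tsum_eq] at h
    have hI : Complex.I ^ 12 = 1 := by
      rw [show 12 = 4 * 3 by norm_num, pow_mul, Complex.I_pow_four, one_pow]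
    simpa [z, mul_pow, hI, div_eq_mul_inv] using h

theorem norm_cpow_le_exp_mul_rpow (z μ : ℂ) :
    ‖z ^ μ‖ ≤ Real.exp (π * |μ.im|) * ‖z‖ ^ μ.re := by
  have harg : -(z.arg * μ.im) ≤ π * |μ.im| :=
    calc -(z.arg * μ.im) ≤ |z.arg| * |μ.im| := (neg_le_abs _).trans_eq (abs_mul _ _)
      _ ≤ π * |μ.im| := by gcongr; exact Complex.abs_arg_le_pi z
  calc ‖z ^ μ‖ ≤ Real.exp (-(z.arg * μ.im)) * ‖z‖ ^ μ.re := by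
        rw [Real.exp_neg, mul_comm, ← div_eq_mul_inv]
        exact Complex.norm_cpow_le z μ
    _ ≤ Real.exp (π * |μ.im|) * ‖z‖ ^ μ.re := by gcongr

theorem norm_cosh_le_exp_abs_re (z : ℂ) : ‖Complex.cosh z‖ ≤ Real.exp |z.re| := by
  rw [Complex.cosh, norm_div, Complex.norm_ofNat, div_le_iff₀ (by norm_num)]
  refine (norm_add_le _ _).trans ?_
  rw [Complex.norm_exp, Complex.norm_exp, Complex.neg_re]
  have h1 := Real.exp_le_exp.mpr (le_abs_self z.re)
  have h2 := Real.exp_le_exp.mpr (neg_le_abs z.re)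
  linarith

theorem factorial_two_mul_le (m : ℕ) : (2 * m)! ≤ 2 ^ (2 * m) * (m ! * m !) := by
  rw [two_mul, ← Nat.add_choose_mul_factorial_mul_factorial m m, mul_assoc]
  gcongr
  exact Nat.choose_le_two_pow _ _

/-! ### The modified Bessel function of the first kind -/

/-- The even entire function `(z / 2) ^ (-μ) * besselI μ z`. -/
noncomputable def besselISeries (μ z : ℂ) : ℂ :=
  ∑' m : ℕ, (z / 2) ^ (2 * m) / ((m ! : ℂ) * Complex.Gamma (μ + m + 1))

theorem besselI_eq_cpow_mul_besselISeries (μ : ℂ) {z : ℂ} (hz : z ≠ 0) :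
    besselI μ z = (z / 2) ^ μ * besselISeries μ z := by
  rw [besselI, besselISeries, ← tsum_mul_left]
  congr with m
  rw [Complex.cpow_add _ _ (div_ne_zero hz two_ne_zero), mul_div_assoc]
  norm_cast

section BesselI

variable {μ : ℂ}

theorem Gamma_add_natCast_add_one_ne_zero (hμ : 0 < μ.re) (m : ℕ) :
    Complex.Gamma (μ + m + 1) ≠ 0 :=
  Complex.Gamma_ne_zero_of_re_pos (by
    simp only [Complex.add_re, Complex.natCast_re, Complex.one_re]
    positivity)

theorem factorial_mul_norm_Gamma_add_one_le (hμ : 0 < μ.re) (m : ℕ) :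
    m ! * ‖Complex.Gamma (μ + 1)‖ ≤ ‖Complex.Gamma (μ + m + 1)‖ := by
  induction m with
  | zero => simp
  | succ k ih =>
    have hk : (k : ℝ) + 1 ≤ ‖μ + k + 1‖ := by
      refine le_trans ?_ (Complex.re_le_norm _)
      simp only [Complex.add_re, Complex.natCast_re, Complex.one_re]
      linarith
    have hk0 : μ + k + 1 ≠ 0 := norm_pos_iff.mp (lt_of_lt_of_le (by positivity) hk)
    calc ((k + 1)! : ℝ) * ‖Complex.Gamma (μ + 1)‖
        = (k + 1) * (k ! * ‖Complex.Gamma (μ + 1)‖) := by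
          rw [Nat.factorial_succ]
          push_cast
          ring
      _ ≤ ‖μ + k + 1‖ * ‖Complex.Gamma (μ + k + 1)‖ := by gcongr
      _ = ‖Complex.Gamma (μ + (k + 1 : ℕ) + 1)‖ := by
          rw [← norm_mul, ← Complex.Gamma_add_one _ hk0, Nat.cast_succ, add_assoc μ]

theorem norm_inv_Gamma_add_natCast_add_one_le (hμ : 0 < μ.re) (m : ℕ) :
    ‖Complex.Gamma (μ + m + 1)‖⁻¹ ≤ ‖Complex.Gamma (μ + 1)‖⁻¹ / m ! := by
  have h0 : 0 < ‖Complex.Gamma (μ + 1)‖ := by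
    simpa using Gamma_add_natCast_add_one_ne_zero hμ 0
  rw [div_eq_inv_mul, ← mul_inv]
  exact inv_anti₀ (by positivity) (factorial_mul_norm_Gamma_add_one_le hμ m)

theorem norm_besselISeries_term_le (hμ : 0 < μ.re) {z : ℂ} {r : ℝ} (hz : ‖z‖ ≤ r) (m : ℕ) :
    ‖(z / 2) ^ (2 * m) / ((m ! : ℂ) * Complex.Gamma (μ + m + 1))‖ ≤
      ‖Complex.Gamma (μ + 1)‖⁻¹ * (r ^ (2 * m) / (2 * m)!) := by
  have hfact : ((2 * m)! : ℝ) ≤ 2 ^ (2 * m) * (m ! * m !) := mod_cast factorial_two_mul_le m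
  calc ‖(z / 2) ^ (2 * m) / ((m ! : ℂ) * Complex.Gamma (μ + m + 1))‖
      = ‖z‖ ^ (2 * m) / (2 ^ (2 * m) * m !) * ‖Complex.Gamma (μ + m + 1)‖⁻¹ := by
        simp only [norm_div, norm_pow, norm_mul, div_pow, Complex.norm_natCast,
          Complex.norm_ofNat]
        field_simp
    _ ≤ r ^ (2 * m) / (2 ^ (2 * m) * m !) * (‖Complex.Gamma (μ + 1)‖⁻¹ / m !) := by
        have hr := (norm_nonneg z).trans hz
        gcongr
        exact norm_inv_Gamma_add_natCast_add_one_le hμ m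
    _ = ‖Complex.Gamma (μ + 1)‖⁻¹ * (r ^ (2 * m) / (2 ^ (2 * m) * (m ! * m !))) := by
        field_simp
    _ ≤ ‖Complex.Gamma (μ + 1)‖⁻¹ * (r ^ (2 * m) / (2 * m)!) := by
        gcongr
        exact pow_nonneg ((norm_nonneg z).trans hz) _

theorem summable_besselISeries (hμ : 0 < μ.re) (z : ℂ) :
    Summable fun m : ℕ => (z / 2) ^ (2 * m) / ((m ! : ℂ) * Complex.Gamma (μ + m + 1)) :=
  .of_norm_bounded ((Real.hasSum_cosh ‖z‖).summable.mul_left _)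
    (norm_besselISeries_term_le hμ le_rfl)

theorem differentiable_besselISeries (hμ : 0 < μ.re) : Differentiable ℂ (besselISeries μ) := by
  intro z
  have h : DifferentiableOn ℂ (besselISeries μ) (Metric.ball 0 (‖z‖ + 1)) :=
    Complex.differentiableOn_tsum_of_summable_norm
      ((Real.hasSum_cosh (‖z‖ + 1)).summable.mul_left _) (fun m => by fun_prop)
      Metric.isOpen_ball fun m x hx =>
        norm_besselISeries_term_le hμ (mem_ball_zero_iff.mp hx).le m
  exact h.differentiableAt (Metric.isOpen_ball.mem_nhds (by simp))

theorem differentiableAt_besselI (hμ : 0 < μ.re) {z : ℂ} (hz : 0 < z.re) :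
    DifferentiableAt ℂ (besselI μ) z := by
  have hslit : z / 2 ∈ Complex.slitPlane := .inl (by simpa using hz)
  have h : DifferentiableAt ℂ (fun z => (z / 2) ^ μ * besselISeries μ z) z :=
    ((differentiableAt_id.div_const 2).cpow_const hslit).mul (differentiable_besselISeries hμ z)
  refine h.congr_of_eventuallyEq ?_
  filter_upwards [isOpen_ne.mem_nhds (Complex.ne_zero_of_re_pos hz)] with w hw
  exact besselI_eq_cpow_mul_besselISeries μ hw

theorem Gamma_natCast_add_half (m : ℕ) :
    Complex.Gamma (m + 1 / 2) = ((2 * m)! : ℂ) * √π / (4 ^ m * m !) := by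
  have h := Complex.Gamma_mul_Gamma_add_half ((m : ℂ) + 1 / 2)
  have hpow : (2 : ℂ) ^ (1 - (((2 * m : ℕ) : ℂ) + 1)) = (4 ^ m)⁻¹ := by
    rw [show (1 - (((2 * m : ℕ) : ℂ) + 1)) = -((2 * m : ℕ) : ℂ) by ring, Complex.cpow_neg,
      Complex.cpow_natCast, pow_mul]
    norm_num
  rw [show (m : ℂ) + 1 / 2 + 1 / 2 = m + 1 by ring, Complex.Gamma_nat_eq_factorial,
    show 2 * ((m : ℂ) + 1 / 2) = ((2 * m : ℕ) : ℂ) + 1 by push_cast; ring,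
    Complex.Gamma_nat_eq_factorial, hpow] at h
  have : (m ! : ℂ) ≠ 0 := mod_cast m.factorial_ne_zero
  field_simp at h ⊢
  linear_combination h

theorem betaIntegral_natCast_add_half (hμ : 0 < μ.re) (m : ℕ) :
    Complex.betaIntegral (m + 1 / 2) (μ + 1 / 2) = √π * Complex.Gamma (μ + 1 / 2) *
      (((2 * m)! : ℂ) / (4 ^ m * (m ! * Complex.Gamma (μ + m + 1)))) := by
  have h := Complex.Gamma_mul_Gamma_eq_betaIntegral (s := m + 1 / 2) (t := μ + 1 / 2)
    (by rw [Complex.add_re, Complex.natCast_re]; norm_num; positivity)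
    (by rw [Complex.add_re]; norm_num; linarith)
  rw [show (m : ℂ) + 1 / 2 + (μ + 1 / 2) = μ + m + 1 by ring, Gamma_natCast_add_half] at h
  have hG := Gamma_add_natCast_add_one_ne_zero hμ m
  have : (m ! : ℂ) ≠ 0 := mod_cast m.factorial_ne_zero
  field_simp at h ⊢
  linear_combination -h

/-- The density `x ^ (-1/2) * (1 - x) ^ (μ - 1/2)` on `(0, 1)` of Poisson's integral for
`besselI μ`, after the substitution `x = t ^ 2`. -/
noncomputable def poissonWeight (μ : ℂ) (x : ℝ) : ℂ :=
  (x : ℂ) ^ ((1 / 2 : ℂ) - 1) * (1 - (x : ℂ)) ^ (μ + 1 / 2 - 1)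

theorem intervalIntegrable_poissonWeight (hμ : 0 < μ.re) :
    IntervalIntegrable (poissonWeight μ) volume 0 1 :=
  Complex.betaIntegral_convergent (by norm_num) (by simp; linarith)

theorem integral_pow_mul_poissonWeight (μ : ℂ) (m : ℕ) :
    ∫ x in (0 : ℝ)..1, (x : ℂ) ^ m * poissonWeight μ x =
      Complex.betaIntegral (m + 1 / 2) (μ + 1 / 2) := by
  refine intervalIntegral.integral_congr_ae (.of_forall fun x hx => ?_)
  rw [uIoc_of_le zero_le_one] at hx
  have hx0 : (x : ℂ) ≠ 0 := mod_cast hx.1.ne'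
  rw [poissonWeight, ← mul_assoc, ← Complex.cpow_natCast, ← Complex.cpow_add _ _ hx0]
  ring_nf

theorem hasSum_integral_cosh_mul {f : ℝ → ℂ} (hf : IntervalIntegrable f volume 0 1) (z : ℂ) :
    HasSum (fun m : ℕ => z ^ (2 * m) / (2 * m)! * ∫ x in (0 : ℝ)..1, (x : ℂ) ^ m * f x)
      (∫ x in (0 : ℝ)..1, Complex.cosh (z * √x) * f x) := by
  simp_rw [← intervalIntegral.integral_const_mul]
  apply intervalIntegral.hasSum_integral_of_dominated_convergence
    (fun (m : ℕ) (x : ℝ) => (‖z‖ ^ (2 * m) / (2 * m)!) * ‖f x‖)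
  · intro m
    have hpow : Continuous fun x : ℝ => (x : ℂ) ^ m := by fun_prop
    exact (hpow.aestronglyMeasurable.mul
      (intervalIntegrable_iff.mp hf).aestronglyMeasurable).const_mul _
  · refine fun m => .of_forall fun x hx => ?_
    rw [uIoc_of_le zero_le_one] at hx
    rw [norm_mul, norm_mul, norm_div, norm_pow, norm_pow, Complex.norm_natCast,
      Complex.norm_real, Real.norm_of_nonneg hx.1.le]
    gcongr
    exact mul_le_of_le_one_left (norm_nonneg _) (pow_le_one₀ hx.1.le hx.2)
  · exact .of_forall fun x _ => (Real.hasSum_cosh ‖z‖).summable.mul_right _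
  · simp_rw [tsum_mul_right]
    exact hf.norm.const_mul _
  · refine .of_forall fun x hx => ?_
    rw [uIoc_of_le zero_le_one] at hx
    convert! (Complex.hasSum_cosh (z * √x)).mul_right (f x) using 2 with m
    rw [mul_pow, pow_mul (√x : ℂ), ← Complex.ofReal_pow √x, Real.sq_sqrt hx.1.le]
    ring

theorem norm_integral_cosh_mul_le {f : ℝ → ℂ} (hf : IntervalIntegrable f volume 0 1) (z : ℂ) :
    ‖∫ x in (0 : ℝ)..1, Complex.cosh (z * √x) * f x‖ ≤
      (∫ x in (0 : ℝ)..1, ‖f x‖) * Real.exp |z.re| := by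
  refine (intervalIntegral.norm_integral_le_integral_norm zero_le_one).trans ?_
  rw [← intervalIntegral.integral_mul_const]
  refine intervalIntegral.integral_mono_on zero_le_one
    (hf.continuousOn_mul (by fun_prop)).norm (hf.norm.mul_const _) fun x hx => ?_
  rw [norm_mul, mul_comm]
  gcongr
  refine (norm_cosh_le_exp_abs_re _).trans ?_
  rw [Complex.re_mul_ofReal, abs_mul, abs_of_nonneg (Real.sqrt_nonneg x)]
  gcongr
  exact mul_le_of_le_one_right (abs_nonneg _) (Real.sqrt_le_one.mpr hx.2)

theorem besselISeries_eq_integral_poissonWeight (hμ : 0 < μ.re) (z : ℂ) :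
    besselISeries μ z = (√π * Complex.Gamma (μ + 1 / 2) : ℂ)⁻¹ *
      ∫ x in (0 : ℝ)..1, Complex.cosh (z * √x) * poissonWeight μ x := by
  have hG : Complex.Gamma (μ + 1 / 2) ≠ 0 :=
    Complex.Gamma_ne_zero_of_re_pos (by simp; linarith)
  have hπ : (√π : ℂ) ≠ 0 := mod_cast (Real.sqrt_pos.mpr Real.pi_pos).ne'
  rw [besselISeries,
    ← (hasSum_integral_cosh_mul (intervalIntegrable_poissonWeight hμ) z).tsum_eq, ← tsum_mul_left]
  congr with m
  have : ((2 * m)! : ℂ) ≠ 0 := mod_cast (2 * m).factorial_ne_zero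
  have h4 : (2 : ℂ) ^ (2 * m) = 4 ^ m := by rw [pow_mul]; norm_num
  rw [integral_pow_mul_poissonWeight, betaIntegral_natCast_add_half hμ, div_pow, h4]
  generalize Complex.Gamma (μ + 1 / 2) = G at hG
  field_simp

theorem exists_norm_besselISeries_le (hμ : 0 < μ.re) :
    ∃ C : ℝ, 0 ≤ C ∧ ∀ z : ℂ, ‖besselISeries μ z‖ ≤ C * Real.exp |z.re| := by
  refine ⟨‖(√π * Complex.Gamma (μ + 1 / 2) : ℂ)⁻¹‖ * ∫ x in (0 : ℝ)..1, ‖poissonWeight μ x‖,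
    mul_nonneg (norm_nonneg _)
      (intervalIntegral.integral_nonneg zero_le_one fun _ _ => norm_nonneg _), fun z => ?_⟩
  rw [besselISeries_eq_integral_poissonWeight hμ, norm_mul, mul_assoc]
  gcongr
  exact norm_integral_cosh_mul_le (intervalIntegrable_poissonWeight hμ) z

theorem exists_norm_besselI_le (hμ : 0 < μ.re) :
    ∃ C : ℝ, 0 ≤ C ∧ ∀ z : ℂ, 0 < z.re → ‖besselI μ z‖ ≤ C * ‖z‖ ^ μ.re * Real.exp z.re := by
  obtain ⟨C, hC, h⟩ := exists_norm_besselISeries_le hμ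
  refine ⟨Real.exp (π * |μ.im|) * C, by positivity, fun z hz => ?_⟩
  rw [besselI_eq_cpow_mul_besselISeries μ (Complex.ne_zero_of_re_pos hz), norm_mul]
  have hhalf : ‖z / 2‖ ≤ ‖z‖ := by
    rw [norm_div, Complex.norm_ofNat]
    exact half_le_self (norm_nonneg z)
  calc ‖(z / 2) ^ μ‖ * ‖besselISeries μ z‖
      ≤ (Real.exp (π * |μ.im|) * ‖z / 2‖ ^ μ.re) * (C * Real.exp |z.re|) := by
        gcongr
        · exact norm_cpow_le_exp_mul_rpow _ _
        · exact h z
    _ ≤ (Real.exp (π * |μ.im|) * ‖z‖ ^ μ.re) * (C * Real.exp z.re) := by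
        rw [abs_of_pos hz]
        gcongr
    _ = Real.exp (π * |μ.im|) * C * ‖z‖ ^ μ.re * Real.exp z.re := by ring

end BesselI

/-! ### The modified Bessel function of the second kind -/

theorem one_add_sq_div_two_le_cosh (t : ℝ) : 1 + t ^ 2 / 2 ≤ Real.cosh t := by
  have h := sum_le_hasSum (Finset.range 2) (fun m _ => div_nonneg
    ((even_two_mul m).pow_nonneg t) (Nat.cast_nonneg _)) (Real.hasSum_cosh t)
  simpa [Finset.sum_range_succ] using h

/-- The integrand of `2 * besselK ν z` when the integral is taken over the whole real line. -/
noncomputable def besselKKernel (ν z : ℂ) (t : ℝ) : ℂ :=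
  Complex.exp (-z * Real.cosh t) * Complex.exp (ν * t)

theorem continuous_besselKKernel (ν z : ℂ) : Continuous (besselKKernel ν z) := by
  have : Continuous fun t : ℝ => (Real.cosh t : ℂ) :=
    Complex.continuous_ofReal.comp Real.continuous_cosh
  unfold besselKKernel
  fun_prop

theorem norm_besselKKernel_le (ν : ℂ) {δ : ℝ} (hδ : 0 < δ) {z : ℂ} (hz : δ ≤ z.re) (t : ℝ) :
    ‖besselKKernel ν z t‖ ≤
      Real.exp (-z.re) * (Real.exp (ν.re ^ 2 / δ) * Real.exp (-(δ / 4) * t ^ 2)) := by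
  have hcosh : z.re * (1 + t ^ 2 / 2) ≤ z.re * Real.cosh t :=
    mul_le_mul_of_nonneg_left (one_add_sq_div_two_le_cosh t) (hδ.le.trans hz)
  have hsq : δ * t ^ 2 ≤ z.re * t ^ 2 := by gcongr
  have hlin : ν.re * t ≤ ν.re ^ 2 / δ + δ / 4 * t ^ 2 := by
    have h : ν.re ^ 2 / δ + δ / 4 * t ^ 2 - ν.re * t = (ν.re - δ / 2 * t) ^ 2 / δ := by
      field_simp
      ring
    exact sub_nonneg.mp (h ▸ by positivity)
  rw [besselKKernel, norm_mul, Complex.norm_exp, Complex.norm_exp, Complex.re_mul_ofReal,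
    Complex.re_mul_ofReal, Complex.neg_re, ← Real.exp_add, ← Real.exp_add, ← Real.exp_add,
    Real.exp_le_exp]
  linarith

theorem integrable_besselKKernel (ν : ℂ) {z : ℂ} (hz : 0 < z.re) :
    Integrable (besselKKernel ν z) :=
  (((integrable_exp_neg_mul_sq (by positivity : 0 < z.re / 4)).const_mul _).const_mul _).mono'
    (continuous_besselKKernel ν z).aestronglyMeasurable
    (.of_forall (norm_besselKKernel_le ν hz le_rfl))

theorem integral_besselKKernel (ν : ℂ) {z : ℂ} (hz : 0 < z.re) :
    ∫ t, besselKKernel ν z t = 2 * besselK ν z := by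
  have hint := integrable_besselKKernel ν hz
  rw [← integral_add_compl measurableSet_Ioi hint (s := Ioi 0), compl_Ioi, ← neg_zero,
    ← integral_comp_neg_Ioi, neg_zero,
    ← integral_add hint.integrableOn hint.comp_neg.integrableOn, besselK, ← integral_const_mul]
  congr with t
  rw [besselKKernel, besselKKernel, Real.cosh_neg, Complex.cosh, Complex.ofReal_neg, mul_neg]
  ring

theorem exists_norm_besselK_le (ν : ℂ) {δ : ℝ} (hδ : 0 < δ) :
    ∃ C : ℝ, 0 ≤ C ∧ ∀ z : ℂ, δ ≤ z.re → ‖besselK ν z‖ ≤ C * Real.exp (-z.re) := by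
  let g : ℝ → ℝ := fun t => Real.exp (ν.re ^ 2 / δ) * Real.exp (-(δ / 4) * t ^ 2)
  have hg : Integrable g := (integrable_exp_neg_mul_sq (by positivity)).const_mul _
  refine ⟨(∫ t, g t) / 2, by positivity, fun z hz => ?_⟩
  have h : ‖∫ t, besselKKernel ν z t‖ ≤ Real.exp (-z.re) * ∫ t, g t := by
    rw [← integral_const_mul]
    exact norm_integral_le_of_norm_le (hg.const_mul _)
      (.of_forall (norm_besselKKernel_le ν hδ hz))
  rw [integral_besselKKernel ν (hδ.trans_le hz), norm_mul, Complex.norm_ofNat] at h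
  linarith

theorem hasDerivAt_besselKKernel_left (ν z : ℂ) (t : ℝ) :
    HasDerivAt (fun z => besselKKernel ν z t)
      (-(besselKKernel (ν - 1) z t + besselKKernel (ν + 1) z t) / 2) z := by
  have h : HasDerivAt (fun z : ℂ => -z * (Real.cosh t : ℂ)) (-(Real.cosh t : ℂ)) z := by
    simpa using (hasDerivAt_neg z).mul_const (Real.cosh t : ℂ)
  convert! h.cexp.mul_const (Complex.exp (ν * t)) using 1
  rw [besselKKernel, besselKKernel, sub_mul, add_mul, one_mul, sub_eq_add_neg, Complex.exp_add,
    Complex.exp_add, Complex.ofReal_cosh, Complex.cosh]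
  ring

theorem hasDerivAt_besselKKernel_right (ν z : ℂ) (t : ℝ) :
    HasDerivAt (besselKKernel ν z)
      (ν * besselKKernel ν z t +
        z / 2 * (besselKKernel (ν - 1) z t - besselKKernel (ν + 1) z t)) t := by
  have h := ((Real.hasDerivAt_cosh t).ofReal_comp.const_mul (-z)).cexp.mul
    ((hasDerivAt_id t).ofReal_comp.const_mul ν).cexp
  convert! h using 1
  simp only [besselKKernel, add_mul, one_mul, neg_mul, sub_eq_add_neg, Complex.exp_add,
    Complex.ofReal_sinh, Complex.sinh, id, Complex.ofReal_one]
  ring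

theorem hasDerivAt_integral_besselKKernel (ν : ℂ) {z : ℂ} (hz : 0 < z.re) :
    HasDerivAt (fun z => ∫ t, besselKKernel ν z t)
      (∫ t, -(besselKKernel (ν - 1) z t + besselKKernel (ν + 1) z t) / 2) z := by
  let G : ℂ → ℝ → ℝ := fun l t =>
    Real.exp (l.re ^ 2 / (z.re / 2)) * Real.exp (-(z.re / 2 / 4) * t ^ 2)
  have hG : ∀ l, Integrable (G l) := fun l =>
    (integrable_exp_neg_mul_sq (by positivity)).const_mul _
  have hle : ∀ l x : ℂ, z.re / 2 < x.re → ∀ t, ‖besselKKernel l x t‖ ≤ G l t := fun l x hx t =>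
    (norm_besselKKernel_le l (half_pos hz) hx.le t).trans <|
      mul_le_of_le_one_left (by positivity) (Real.exp_le_one_iff.mpr (by linarith))
  refine (hasDerivAt_integral_of_dominated_loc_of_deriv_le
    (bound := fun t => (G (ν - 1) t + G (ν + 1) t) / 2)
    ((isOpen_lt continuous_const Complex.continuous_re).mem_nhds (half_lt_self hz))
    (.of_forall fun x => (continuous_besselKKernel ν x).aestronglyMeasurable)
    (integrable_besselKKernel ν hz)
    (((integrable_besselKKernel (ν - 1) hz).add
      (integrable_besselKKernel (ν + 1) hz)).neg.div_const 2).aestronglyMeasurable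
    (.of_forall fun t x hx => ?_) (((hG _).add (hG _)).div_const 2)
    (.of_forall fun t x _ => hasDerivAt_besselKKernel_left ν x t)).2
  rw [norm_div, norm_neg, Complex.norm_ofNat]
  gcongr
  exact (norm_add_le _ _).trans (add_le_add (hle _ x hx t) (hle _ x hx t))

theorem hasDerivAt_besselK (ν : ℂ) {z : ℂ} (hz : 0 < z.re) :
    HasDerivAt (besselK ν) (-(besselK (ν - 1) z + besselK (ν + 1) z) / 2) z := by
  have h := (hasDerivAt_integral_besselKKernel ν hz).div_const 2
  rw [integral_div, integral_neg, integral_add (integrable_besselKKernel _ hz)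
    (integrable_besselKKernel _ hz), integral_besselKKernel _ hz, integral_besselKKernel _ hz,
    ← mul_add, ← mul_neg, mul_div_cancel_left₀ _ two_ne_zero] at h
  refine h.congr_of_eventuallyEq ?_
  filter_upwards [(isOpen_lt continuous_const Complex.continuous_re).mem_nhds hz] with x hx
  rw [integral_besselKKernel ν hx, mul_div_cancel_left₀ _ two_ne_zero]

theorem mul_besselK_add_one (ν : ℂ) {z : ℂ} (hz : 0 < z.re) :
    z / 2 * besselK (ν + 1) z = z / 2 * besselK (ν - 1) z + ν * besselK ν z := by
  have hint := fun l => integrable_besselKKernel l hz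
  have hdiff : Integrable fun t => besselKKernel (ν - 1) z t - besselKKernel (ν + 1) z t :=
    (hint (ν - 1)).sub (hint (ν + 1))
  have h := integral_eq_zero_of_hasDerivAt_of_integrable (hasDerivAt_besselKKernel_right ν z)
    (((hint ν).const_mul ν).add (hdiff.const_mul (z / 2))) (hint ν)
  rw [integral_add ((hint ν).const_mul ν) (hdiff.const_mul (z / 2)), integral_const_mul,
    integral_const_mul, integral_sub (hint _) (hint _)] at h
  simp only [integral_besselKKernel _ hz] at h
  linear_combination (-1 / 2) * h

theorem integral_Ioi_eq_integral_mul_exp {E : Type*} [NormedAddCommGroup E] [NormedSpace ℝ E]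
    (g : ℝ → E) {a : ℝ} (ha : 0 < a) :
    ∫ u in Ioi (0 : ℝ), g u = ∫ t : ℝ, (a * Real.exp t) • g (a * Real.exp t) := by
  have hrange : range (fun t => a * Real.exp t) = Ioi 0 := by
    rw [range_comp' (a * ·), Real.range_exp, image_mul_left_Ioi ha, mul_zero]
  have hinj : Function.Injective fun t => a * Real.exp t :=
    (mul_right_injective₀ ha.ne').comp Real.exp_injective
  have h := integral_image_eq_integral_abs_deriv_smul MeasurableSet.univ
    (fun t _ => ((Real.hasDerivAt_exp t).const_mul a).hasDerivWithinAt) hinj.injOn g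
  rw [image_univ, hrange, setIntegral_univ] at h
  rw [h]
  congr with t
  rw [abs_of_pos (by positivity)]

theorem integral_exp_neg_sub_div_mul_cpow (ν : ℂ) {W : ℝ} (hW : 0 < W) :
    ∫ u in Ioi (0 : ℝ), (Real.exp (-u - W ^ 2 / 4 / u) : ℂ) * (u : ℂ) ^ (ν - 1) =
      2 * (W / 2 : ℂ) ^ ν * besselK ν W := by
  rw [mul_right_comm, ← integral_besselKKernel ν (by simpa using hW), ← integral_mul_const,
    integral_Ioi_eq_integral_mul_exp _ (half_pos hW)]
  congr with t
  have hu : ((W / 2 * Real.exp t : ℝ) : ℂ) ≠ 0 := mod_cast (by positivity)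
  have hexp : -(W / 2 * Real.exp t) - W ^ 2 / 4 / (W / 2 * Real.exp t) = -W * Real.cosh t := by
    rw [Real.cosh_eq, Real.exp_neg]
    field_simp
    ring
  have hcpow : ((W / 2 * Real.exp t : ℝ) : ℂ) ^ ν = (W / 2 : ℂ) ^ ν * Complex.exp (ν * t) := by
    rw [Complex.ofReal_mul, Complex.mul_cpow_ofReal_nonneg (by positivity) (Real.exp_pos t).le,
      Complex.ofReal_div, Complex.ofReal_ofNat, Complex.cpow_def_of_ne_zero
      (Complex.ofReal_ne_zero.mpr (Real.exp_ne_zero t)), ← Complex.ofReal_log (Real.exp_pos t).le,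
      Real.log_exp, mul_comm (t : ℂ)]
  rw [Complex.real_smul, mul_left_comm, hexp, Complex.cpow_sub _ _ hu, Complex.cpow_one,
    mul_div_cancel₀ _ hu, hcpow, besselKKernel, Complex.ofReal_exp]
  push_cast
  ring

/-! ### Laguerre moments -/

/-- The coefficients in the expansion
`(-1) ^ N / Γ (μ + N + 1) * L_N^(μ) u = ∑ i + j = N, laguerreCoeff μ i j * u ^ j`
of the generalized Laguerre polynomials `L_N^(μ)`. -/
noncomputable def laguerreCoeff (μ : ℂ) (i j : ℕ) : ℂ :=
  (-1) ^ i * ((i ! : ℂ) * j ! * Complex.Gamma (μ + j + 1))⁻¹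

/-- If `M z` is the Mellin moment `∫ ρ(u) u ^ z du` of a density `ρ`, this is, up to sign, the
moment `∫ ρ(u) u ^ (μ + N) L_N^(μ)(u) du / Γ (μ + N + 1)` of the `N`-th Laguerre polynomial. -/
noncomputable def laguerreMoment (μ : ℂ) (M : ℂ → ℂ) (N : ℕ) : ℂ :=
  ∑ x ∈ Finset.HasAntidiagonal.antidiagonal N, laguerreCoeff μ x.1 x.2 * M (μ + x.1 + 2 * x.2)

theorem mul_laguerreCoeff_succ_left (μ : ℂ) (i j : ℕ) :
    (i + 1) * laguerreCoeff μ (i + 1) j = -laguerreCoeff μ i j := by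
  rw [laguerreCoeff, laguerreCoeff, Nat.factorial_succ, pow_succ]
  push_cast
  rw [mul_assoc ((i : ℂ) + 1), mul_assoc ((i : ℂ) + 1), mul_inv ((i : ℂ) + 1)]
  have : (i : ℂ) + 1 ≠ 0 := Nat.cast_add_one_ne_zero i
  field_simp

theorem mul_laguerreCoeff_succ_right (μ : ℂ) (i j : ℕ) :
    (j + 1) * (μ + (j + 1)) * laguerreCoeff μ i (j + 1) = laguerreCoeff μ i j := by
  have hj : (j : ℂ) + 1 ≠ 0 := Nat.cast_add_one_ne_zero j
  have hΓ := Complex.one_div_Gamma_eq_self_mul_one_div_Gamma_add_one (μ + (j + 1))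
  rw [laguerreCoeff, laguerreCoeff, Nat.factorial_succ]
  push_cast
  simp only [mul_inv, add_assoc μ (j : ℂ) 1, hΓ]
  field_simp

theorem mul_laguerreMoment_succ (μ : ℂ) (M : ℂ → ℂ) (N : ℕ) :
    (N + 1) * (μ + N + 1) * laguerreMoment μ M (N + 1) =
      laguerreMoment μ (fun z => M (z + 2) - (z + 1) * M (z + 1)) N := by
  have hleft : ∑ x ∈ Finset.HasAntidiagonal.antidiagonal (N + 1),
      x.1 * laguerreCoeff μ x.1 x.2 * ((μ + x.1 + 2 * x.2) * M (μ + x.1 + 2 * x.2)) =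
      -laguerreMoment μ (fun z => (z + 1) * M (z + 1)) N := by
    rw [Finset.Nat.sum_antidiagonal_succ, laguerreMoment, ← Finset.sum_neg_distrib]
    simp only [Nat.cast_zero, zero_mul, zero_add, Nat.cast_add, Nat.cast_one,
      mul_laguerreCoeff_succ_left, neg_mul]
    refine Finset.sum_congr rfl fun x _ => ?_
    rw [show μ + (x.1 + 1) + 2 * x.2 = μ + x.1 + 2 * x.2 + 1 by ring]
  have hright : ∑ x ∈ Finset.HasAntidiagonal.antidiagonal (N + 1),
      x.2 * (μ + x.2) * laguerreCoeff μ x.1 x.2 * M (μ + x.1 + 2 * x.2) =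
      laguerreMoment μ (fun z => M (z + 2)) N := by
    rw [Finset.Nat.sum_antidiagonal_succ', laguerreMoment]
    simp only [Nat.cast_zero, zero_mul, zero_add, Nat.cast_add, Nat.cast_one,
      mul_laguerreCoeff_succ_right]
    refine Finset.sum_congr rfl fun x _ => ?_
    rw [show μ + x.1 + 2 * (x.2 + 1) = μ + x.1 + 2 * x.2 + 2 by ring]
  have hsub : laguerreMoment μ (fun z => M (z + 2) - (z + 1) * M (z + 1)) N =
      laguerreMoment μ (fun z => M (z + 2)) N -
        laguerreMoment μ (fun z => (z + 1) * M (z + 1)) N := by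
    simp only [laguerreMoment, mul_sub, Finset.sum_sub_distrib]
  rw [hsub, sub_eq_add_neg, ← hleft, ← hright, ← Finset.sum_add_distrib, laguerreMoment,
    Finset.mul_sum]
  refine Finset.sum_congr rfl fun x hx => ?_
  have hN : (x.1 : ℂ) + x.2 = N + 1 := mod_cast Finset.HasAntidiagonal.mem_antidiagonal.mp hx
  -- `(i + j) (μ + i + j) = j (μ + j) + i (μ + i + 2 j)`
  rw [add_assoc μ, ← hN]
  ring

theorem laguerreMoment_zero (μ : ℂ) (M : ℂ → ℂ) :
    laguerreMoment μ M 0 = M μ / Complex.Gamma (μ + 1) := by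
  simp [laguerreMoment, laguerreCoeff, div_eq_inv_mul]

theorem laguerreMoment_succ_eq_div {μ : ℂ} (hμ : 0 < μ.re) (M : ℂ → ℂ) (N : ℕ) :
    laguerreMoment μ M (N + 1) =
      laguerreMoment μ (fun z => M (z + 2) - (z + 1) * M (z + 1)) N /
        ((N + 1) * (μ + N + 1)) := by
  have hN : (N : ℂ) + 1 ≠ 0 := Nat.cast_add_one_ne_zero N
  have hμN : μ + N + 1 ≠ 0 := Complex.ne_zero_of_re_pos (by
    simp only [Complex.add_re, Complex.natCast_re, Complex.one_re]
    positivity)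
  rw [eq_div_iff (mul_ne_zero hN hμN), ← mul_laguerreMoment_succ, mul_comm]

theorem factorial_succ_mul_Gamma_add_natCast {μ : ℂ} (hμ : 0 < μ.re) (N : ℕ) :
    ((N + 1)! : ℂ) * Complex.Gamma (μ + (N + 1 : ℕ) + 1) =
      (N ! * Complex.Gamma (μ + N + 1)) * ((N + 1) * (μ + N + 1)) := by
  have hμN : μ + N + 1 ≠ 0 := Complex.ne_zero_of_re_pos (by
    simp only [Complex.add_re, Complex.natCast_re, Complex.one_re]
    positivity)
  rw [Nat.factorial_succ, Nat.cast_succ N, ← add_assoc μ, Complex.Gamma_add_one _ hμN]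
  push_cast
  ring

theorem laguerreMoment_eq_pow_mul {μ κ : ℂ} (hμ : 0 < μ.re) {M : ℂ → ℂ}
    (hM : ∀ z, M (z + 2) - (z + 1) * M (z + 1) = κ * M z) (N : ℕ) :
    laguerreMoment μ M N = κ ^ N * M μ / (N ! * Complex.Gamma (μ + N + 1)) := by
  induction N with
  | zero => simp [laguerreMoment_zero]
  | succ N ih =>
    have hκ : laguerreMoment μ (fun z => κ * M z) N = κ * laguerreMoment μ M N := by
      simp only [laguerreMoment, Finset.mul_sum]
      exact Finset.sum_congr rfl fun x _ => by ring
    rw [laguerreMoment_succ_eq_div hμ, factorial_succ_mul_Gamma_add_natCast hμ]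
    simp only [hM]
    rw [hκ, ih, mul_div_assoc', div_div, pow_succ', mul_assoc κ]

theorem laguerreMoment_Gamma {μ l : ℂ} (hμ : 0 < μ.re) (hl : 0 < l.re) (N : ℕ) :
    laguerreMoment μ (fun z => Complex.Gamma (z + l)) N =
      (ascPochhammer ℂ N).eval l * Complex.Gamma (μ + l + N) /
        (N ! * Complex.Gamma (μ + N + 1)) := by
  induction N generalizing l with
  | zero => simp [laguerreMoment_zero]
  | succ N ih =>
    have hshift : laguerreMoment μ
        (fun z => Complex.Gamma (z + 2 + l) - (z + 1) * Complex.Gamma (z + 1 + l)) N =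
        l * laguerreMoment μ (fun z => Complex.Gamma (z + (l + 1))) N := by
      rw [laguerreMoment, laguerreMoment, Finset.mul_sum]
      refine Finset.sum_congr rfl fun x _ => ?_
      generalize hz : μ + x.1 + 2 * x.2 = z
      have hz0 : z + 1 + l ≠ 0 := Complex.ne_zero_of_re_pos (by
        simp only [← hz, Complex.add_re, Complex.mul_re, Complex.natCast_re, Complex.natCast_im,
          Complex.re_ofNat, mul_zero, sub_zero, Complex.one_re]
        positivity)
      rw [show z + 2 + l = z + 1 + l + 1 by ring, Complex.Gamma_add_one _ hz0,
        show z + (l + 1) = z + 1 + l by ring]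
      ring
    have hl1 : 0 < (l + 1).re := by
      rw [Complex.add_re, Complex.one_re]
      positivity
    have hpoch : (ascPochhammer ℂ (N + 1)).eval l = l * (ascPochhammer ℂ N).eval (l + 1) := by
      simp [ascPochhammer_succ_left, Polynomial.eval_comp]
    rw [laguerreMoment_succ_eq_div hμ, factorial_succ_mul_Gamma_add_natCast hμ, hshift,
      ih hl1, hpoch, mul_div_assoc', div_div, mul_assoc l,
      show μ + (l + 1) + N = μ + l + (N + 1 : ℕ) by push_cast; ring]

section TermwiseIntegration

variable {μ : ℂ} {u w : ℝ}

theorem hasSum_laguerreCoeff_mul_cpow (hμ : 0 < μ.re) (hu : 0 < u) (hw : 0 < w) :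
    HasSum (fun x : ℕ × ℕ => (w : ℂ) ^ μ * (w : ℂ) ^ (2 * (x.1 + x.2)) *
        (laguerreCoeff μ x.1 x.2 * (u : ℂ) ^ (μ + x.1 + 2 * x.2)))
      (Real.exp (-(u * w ^ 2)) * besselI μ (2 * u * w)) := by
  have hu0 : (u : ℂ) ≠ 0 := mod_cast hu.ne'
  have hw0 : (w : ℂ) ≠ 0 := mod_cast hw.ne'
  have hexp : HasSum (fun i : ℕ => (-(u * w ^ 2) : ℂ) ^ i / i !) (Complex.exp (-(u * w ^ 2))) := by
    rw [Complex.exp_eq_exp_ℂ]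
    exact NormedSpace.expSeries_div_hasSum_exp _
  have hser : HasSum (fun j : ℕ => (2 * u * w / 2 : ℂ) ^ (2 * j) /
      ((j ! : ℂ) * Complex.Gamma (μ + j + 1))) (besselISeries μ (2 * u * w)) :=
    (summable_besselISeries hμ (2 * u * w)).hasSum
  have hsummable := summable_mul_of_summable_norm hexp.summable.norm hser.summable.norm
  have hprod := hexp.mul hser hsummable
  convert! hprod.mul_left ((u : ℂ) ^ μ * (w : ℂ) ^ μ) using 1
  · ext x
    have hcpow : (u : ℂ) ^ (μ + x.1 + 2 * x.2) =
        (u : ℂ) ^ μ * (u : ℂ) ^ x.1 * (u : ℂ) ^ (2 * x.2) := by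
      rw [Complex.cpow_add _ _ hu0, Complex.cpow_add _ _ hu0]
      norm_cast
    rw [hcpow, laguerreCoeff, neg_pow (u * w ^ 2 : ℂ), show (2 * u * w / 2 : ℂ) = u * w by ring]
    ring
  · rw [besselI_eq_cpow_mul_besselISeries μ (by simp [hu0, hw0] : (2 * u * w : ℂ) ≠ 0),
      show (2 * u * w / 2 : ℂ) = u * w by ring, Complex.mul_cpow_ofReal_nonneg hu.le hw.le]
    push_cast
    ring

theorem norm_laguerreCoeff_mul_cpow_le (hμ : 0 < μ.re) (hu : 0 < u) (hw : 0 < w) (x : ℕ × ℕ) :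
    ‖(w : ℂ) ^ μ * (w : ℂ) ^ (2 * (x.1 + x.2)) *
        (laguerreCoeff μ x.1 x.2 * (u : ℂ) ^ (μ + x.1 + 2 * x.2))‖ ≤
      w ^ μ.re * ‖Complex.Gamma (μ + 1)‖⁻¹ * u ^ μ.re *
        ((u * w ^ 2) ^ x.1 / x.1! * ((2 * (u * w)) ^ (2 * x.2) / (2 * x.2)!)) := by
  have hre : u ^ (μ + x.1 + 2 * x.2).re = u ^ μ.re * u ^ x.1 * u ^ (2 * x.2) := by
    rw [show (μ + x.1 + 2 * x.2).re = μ.re + x.1 + (2 * x.2 : ℕ) by simp,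
      Real.rpow_add hu, Real.rpow_add hu, Real.rpow_natCast, Real.rpow_natCast]
  have hterm := norm_besselISeries_term_le hμ (z := 2 * u * w) (r := 2 * (u * w))
    (le_of_eq (by simp [abs_of_pos hu, abs_of_pos hw, mul_assoc])) x.2
  rw [show (2 * u * w / 2 : ℂ) = (u * w : ℝ) by push_cast; ring, norm_div, norm_pow,
    Complex.norm_real, Real.norm_of_nonneg (by positivity : 0 ≤ u * w), norm_mul,
    Complex.norm_natCast] at hterm
  rw [norm_mul, norm_mul, norm_mul, norm_pow, Complex.norm_cpow_eq_rpow_re_of_pos hu,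
    Complex.norm_cpow_eq_rpow_re_of_pos hw, hre, laguerreCoeff, norm_mul, norm_inv, norm_mul,
    norm_mul, norm_pow, norm_neg, norm_one, one_pow, one_mul, Complex.norm_natCast,
    Complex.norm_natCast, Complex.norm_real, Real.norm_of_nonneg hw.le]
  calc w ^ μ.re * w ^ (2 * (x.1 + x.2)) *
        ((x.1! * x.2! * ‖Complex.Gamma (μ + x.2 + 1)‖)⁻¹ * (u ^ μ.re * u ^ x.1 * u ^ (2 * x.2)))
      = w ^ μ.re * u ^ μ.re * ((u * w ^ 2) ^ x.1 / x.1!) *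
          ((u * w) ^ (2 * x.2) / (x.2! * ‖Complex.Gamma (μ + x.2 + 1)‖)) := by ring
    _ ≤ w ^ μ.re * u ^ μ.re * ((u * w ^ 2) ^ x.1 / x.1!) *
          (‖Complex.Gamma (μ + 1)‖⁻¹ * ((2 * (u * w)) ^ (2 * x.2) / (2 * x.2)!)) := by gcongr
    _ = w ^ μ.re * ‖Complex.Gamma (μ + 1)‖⁻¹ * u ^ μ.re *
        ((u * w ^ 2) ^ x.1 / x.1! * ((2 * (u * w)) ^ (2 * x.2) / (2 * x.2)!)) := by ring

theorem hasSum_pow_div_factorial_mul_pow_div_factorial (x y : ℝ) :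
    HasSum (fun p : ℕ × ℕ => x ^ p.1 / p.1! * (y ^ (2 * p.2) / (2 * p.2)!))
      (Real.exp x * Real.cosh y) := by
  have hexp : HasSum (fun i : ℕ => x ^ i / i !) (Real.exp x) := by
    rw [Real.exp_eq_exp_ℝ]
    exact NormedSpace.expSeries_div_hasSum_exp x
  have hcosh := Real.hasSum_cosh y
  have hsummable := summable_mul_of_summable_norm hexp.summable.norm hcosh.summable.norm
  exact hexp.mul hcosh hsummable

theorem exp_mul_cosh_le (hu : 0 ≤ u) (hw : 0 ≤ w) :
    Real.exp (u * w ^ 2) * Real.cosh (2 * (u * w)) ≤ Real.exp (u * (w ^ 2 + 2 * w)) := by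
  have hcosh : Real.cosh (2 * (u * w)) ≤ Real.exp (2 * (u * w)) := by
    have := Real.cosh_add_sinh (2 * (u * w))
    have := Real.sinh_nonneg_iff.mpr (by positivity : 0 ≤ 2 * (u * w))
    linarith
  calc Real.exp (u * w ^ 2) * Real.cosh (2 * (u * w))
      ≤ Real.exp (u * w ^ 2) * Real.exp (2 * (u * w)) := by gcongr
    _ = Real.exp (u * (w ^ 2 + 2 * w)) := by rw [← Real.exp_add]; ring_nf

theorem aestronglyMeasurable_ofReal_cpow (l : ℂ) :
    AEStronglyMeasurable (fun u : ℝ => (u : ℂ) ^ l) (volume.restrict (Ioi 0)) :=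
  ContinuousOn.aestronglyMeasurable (fun u hu =>
    (Complex.continuousAt_ofReal_cpow_const u l (.inr (mem_Ioi.mp hu).ne')).continuousWithinAt)
    measurableSet_Ioi

theorem hasSum_integral_mul_exp_mul_besselI (hμ : 0 < μ.re) (hw : 0 < w) {ρ : ℝ → ℂ}
    (hρm : AEStronglyMeasurable ρ (volume.restrict (Ioi 0)))
    (hρ : IntegrableOn (fun u => ‖ρ u‖ * u ^ μ.re * Real.exp (u * (w ^ 2 + 2 * w))) (Ioi 0)) :
    HasSum (fun x : ℕ × ℕ => (w : ℂ) ^ μ * (w : ℂ) ^ (2 * (x.1 + x.2)) *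
        (laguerreCoeff μ x.1 x.2 * ∫ u in Ioi (0 : ℝ), ρ u * (u : ℂ) ^ (μ + x.1 + 2 * x.2)))
      (∫ u in Ioi (0 : ℝ), ρ u * (Real.exp (-(u * w ^ 2)) * besselI μ (2 * u * w))) := by
  set C := w ^ μ.re * ‖Complex.Gamma (μ + 1)‖⁻¹
  have : 0 ≤ C := by positivity
  let B : ℕ × ℕ → ℝ → ℝ := fun x u => ‖ρ u‖ * (C * u ^ μ.re *
    ((u * w ^ 2) ^ x.1 / x.1! * ((2 * (u * w)) ^ (2 * x.2) / (2 * x.2)!)))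
  have hB (u : ℝ) : HasSum (B · u) (‖ρ u‖ * (C * u ^ μ.re *
      (Real.exp (u * w ^ 2) * Real.cosh (2 * (u * w))))) :=
    ((hasSum_pow_div_factorial_mul_pow_div_factorial _ _).mul_left _).mul_left _
  have hIoi : ∀ᵐ u ∂volume.restrict (Ioi (0 : ℝ)), 0 < u := ae_restrict_mem measurableSet_Ioi
  simp_rw [← integral_const_mul]
  refine hasSum_integral_of_dominated_convergence B (fun x => ?_) (fun x => ?_)
    (.of_forall fun u => (hB u).summable) ?_ ?_
  · exact ((hρm.mul (aestronglyMeasurable_ofReal_cpow _)).const_mul _).const_mul _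
  · filter_upwards [hIoi] with u hu
    rw [mul_left_comm _ (ρ u), mul_left_comm _ (ρ u), norm_mul (ρ u)]
    exact mul_le_mul_of_nonneg_left (norm_laguerreCoeff_mul_cpow_le hμ hu hw x) (norm_nonneg _)
  · simp_rw [(hB _).tsum_eq]
    refine (hρ.mul_const C).mono' ?_ ?_
    · have := Real.continuous_cosh
      have hrpow : Measurable fun u : ℝ => u ^ μ.re := by fun_prop
      exact hρm.norm.mul ((hrpow.const_mul C).aestronglyMeasurable.mul
        (by fun_prop : Continuous fun u : ℝ =>
          Real.exp (u * w ^ 2) * Real.cosh (2 * (u * w))).aestronglyMeasurable)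
    · filter_upwards [hIoi] with u hu
      have := Real.cosh_pos (2 * (u * w))
      rw [Real.norm_of_nonneg (by positivity)]
      calc ‖ρ u‖ * (C * u ^ μ.re * (Real.exp (u * w ^ 2) * Real.cosh (2 * (u * w))))
          ≤ ‖ρ u‖ * (C * u ^ μ.re * Real.exp (u * (w ^ 2 + 2 * w))) := by
            gcongr; exact exp_mul_cosh_le hu.le hw.le
        _ = ‖ρ u‖ * u ^ μ.re * Real.exp (u * (w ^ 2 + 2 * w)) * C := by ring
  · filter_upwards [hIoi] with u hu
    convert! (hasSum_laguerreCoeff_mul_cpow hμ hu hw).mul_left (ρ u) using 2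
    ring

theorem hasSum_laguerreMoment (hμ : 0 < μ.re) (hw : 0 < w) {ρ : ℝ → ℂ}
    (hρm : AEStronglyMeasurable ρ (volume.restrict (Ioi 0)))
    (hρ : IntegrableOn (fun u => ‖ρ u‖ * u ^ μ.re * Real.exp (u * (w ^ 2 + 2 * w))) (Ioi 0)) :
    HasSum (fun N : ℕ => (w : ℂ) ^ μ * (w : ℂ) ^ (2 * N) *
        laguerreMoment μ (fun z => ∫ u in Ioi (0 : ℝ), ρ u * (u : ℂ) ^ z) N)
      (∫ u in Ioi (0 : ℝ), ρ u * (Real.exp (-(u * w ^ 2)) * besselI μ (2 * u * w))) := by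
  have h := hasSum_integral_mul_exp_mul_besselI hμ hw hρm hρ
  rw [← Finset.HasAntidiagonal.sigmaAntidiagonalEquivProd.hasSum_iff] at h
  convert! h.sigma fun N => hasSum_fintype _ using 1
  ext N
  rw [laguerreMoment, Finset.mul_sum, ← Finset.sum_coe_sort]
  refine Finset.sum_congr rfl fun x _ => ?_
  simp only [Function.comp_apply, Finset.HasAntidiagonal.sigmaAntidiagonalEquivProd_apply,
    Finset.HasAntidiagonal.mem_antidiagonal.mp x.2]

end TermwiseIntegration

/-! ### The hypergeometric series -/

section HypPowerSeries

open PowerSeries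

/-- The formal Gauss hypergeometric series, whose evaluation is `hyp2F1`. -/
noncomputable def hypPowerSeries (a b c : ℂ) : ℂ⟦X⟧ :=
  PowerSeries.mk fun n => ((ascPochhammer ℂ n).eval a * (ascPochhammer ℂ n).eval b) /
    ((ascPochhammer ℂ n).eval c * (n ! : ℂ))

/-- The hypergeometric differential operator
`X (1 - X) f'' + (c - (a + b + 1) X) f' - a b f` on formal power series. -/
noncomputable def hypOperator (a b c : ℂ) (f : ℂ⟦X⟧) : ℂ⟦X⟧ :=
  X * (1 - X) * d⁄dX ℂ (d⁄dX ℂ f) + (C c - C (a + b + 1) * X) * d⁄dX ℂ f - C (a * b) * f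

theorem coeff_hypOperator (a b c : ℂ) (f : ℂ⟦X⟧) (n : ℕ) :
    coeff n (hypOperator a b c f) =
      (n + 1) * (n + c) * coeff (n + 1) f - (n + a) * (n + b) * coeff n f := by
  have hexpand : hypOperator a b c f = X * d⁄dX ℂ (d⁄dX ℂ f) - X * (X * d⁄dX ℂ (d⁄dX ℂ f)) +
      C c * d⁄dX ℂ f - C (a + b + 1) * (X * d⁄dX ℂ f) - C (a * b) * f := by
    rw [hypOperator]
    ring
  rw [hexpand]
  simp only [LinearMap.map_sub, LinearMap.map_add, coeff_C_mul]
  rcases n with _ | _ | n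
  · simp [coeff_derivative]
  · simp only [zero_add, coeff_succ_X_mul, coeff_zero_X_mul, coeff_derivative]
    push_cast
    ring
  · simp only [coeff_succ_X_mul, coeff_derivative]
    push_cast
    ring

theorem ascPochhammer_eval_ne_zero {c : ℂ} (hc : ∀ n : ℕ, c + n ≠ 0) (n : ℕ) :
    (ascPochhammer ℂ n).eval c ≠ 0 := by
  induction n with
  | zero => simp
  | succ n ih =>
    rw [ascPochhammer_succ_eval]
    exact mul_ne_zero ih (hc n)

theorem hypOperator_hypPowerSeries (a b : ℂ) {c : ℂ} (hc : ∀ n : ℕ, c + n ≠ 0) :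
    hypOperator a b c (hypPowerSeries a b c) = 0 := by
  ext n
  rw [coeff_hypOperator, hypPowerSeries, coeff_mk, coeff_mk, ascPochhammer_succ_eval,
    ascPochhammer_succ_eval, ascPochhammer_succ_eval, Nat.factorial_succ, map_zero]
  have hpoch := ascPochhammer_eval_ne_zero hc n
  have hcn := hc n
  have hfact : (n ! : ℂ) ≠ 0 := mod_cast n.factorial_ne_zero
  have hn : (n + 1 : ℂ) ≠ 0 := Nat.cast_add_one_ne_zero n
  push_cast
  field_simp
  ring

theorem eq_hypPowerSeries {a b c : ℂ} (hc : ∀ n : ℕ, c + n ≠ 0) {f : ℂ⟦X⟧}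
    (h0 : coeff 0 f = 1) (hf : hypOperator a b c f = 0) : f = hypPowerSeries a b c := by
  ext n
  induction n with
  | zero => simp [h0, hypPowerSeries]
  | succ n ih =>
    have hrec := congrArg (coeff n) hf
    have hrec' := congrArg (coeff n) (hypOperator_hypPowerSeries a b hc)
    rw [coeff_hypOperator] at hrec hrec'
    rw [ih] at hrec
    refine mul_left_cancel₀ (mul_ne_zero (Nat.cast_add_one_ne_zero n) (hc n)) ?_
    linear_combination hrec - hrec'

theorem one_sub_X_mul_derivative_one_sub_X_pow (n : ℕ) :
    (1 - X) * d⁄dX ℂ ((1 - X : ℂ⟦X⟧) ^ n) = -((n : ℂ⟦X⟧) * (1 - X) ^ n) := by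
  rw [derivative_pow, map_sub, derivative_X, derivative_one]
  rcases n with _ | n
  · simp
  · rw [Nat.add_sub_cancel]
    push_cast
    ring

theorem one_sub_X_pow_mul_hypPowerSeries {a b c : ℂ} {n : ℕ} (hc : ∀ n : ℕ, c + n ≠ 0)
    (habc : a + b = c + n) :
    (1 - X) ^ n * hypPowerSeries a b c = hypPowerSeries (c - a) (c - b) c := by
  refine eq_hypPowerSeries hc (by simp [hypPowerSeries]) ?_
  have hg := hypOperator_hypPowerSeries a b hc
  generalize hypPowerSeries a b c = g at hg ⊢
  have hP := one_sub_X_mul_derivative_one_sub_X_pow n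
  generalize (1 - X : ℂ⟦X⟧) ^ n = P at hP ⊢
  have hP' : (1 - X) * d⁄dX ℂ (d⁄dX ℂ P) = (1 - (n : ℂ⟦X⟧)) * d⁄dX ℂ P := by
    have := congrArg (d⁄dX ℂ) hP
    simp only [map_neg, Derivation.leibniz, Derivation.map_natCast, map_sub, derivative_X,
      derivative_one, smul_eq_mul] at this
    linear_combination this
  have hn : (n : ℂ⟦X⟧) = C a + C b - C c := by
    rw [← map_natCast C n, ← map_add, ← map_sub, habc, add_sub_cancel_left]
  have hX : (1 - X : ℂ⟦X⟧) ≠ 0 := fun h => by simpa using congrArg (coeff 0) h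
  refine (mul_eq_zero.mp ?_).resolve_left hX
  rw [hn] at hP hP'
  rw [hypOperator] at hg ⊢
  simp only [Derivation.leibniz, smul_eq_mul, map_add, map_sub, map_mul, map_one] at hg ⊢
  linear_combination P * (1 - X) * hg + X * (1 - X) * g * hP' +
    (X * (1 - (C a + C b - C c)) * g + 2 * X * (1 - X) * d⁄dX ℂ g +
      (C c - (2 * C c - C a - C b + 1) * X) * g) * hP

theorem hasSum_coeff_one_sub_X_pow_mul {f : ℂ⟦X⟧} {z S : ℂ}
    (h : HasSum (fun n => coeff n f * z ^ n) S) (k : ℕ) :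
    HasSum (fun n => coeff n ((1 - X) ^ k * f) * z ^ n) ((1 - z) ^ k * S) := by
  induction k with
  | zero => simpa using h
  | succ k ih =>
    set g := (1 - X) ^ k * f with hg
    have hXg : HasSum (fun n => coeff n (X * g) * z ^ n) (z * ((1 - z) ^ k * S)) := by
      rw [← hasSum_nat_add_iff' 1]
      simp only [coeff_succ_X_mul]
      convert! ih.mul_left z using 1
      · ext n
        ring
      · simp
    convert! ih.sub hXg using 1
    · ext n
      rw [pow_succ', mul_assoc, ← hg, sub_mul, one_mul, map_sub, sub_mul]
    · ring

theorem hasSum_coeff_hypPowerSeries_of_add_eq {a b c z S : ℂ} {n : ℕ} (hc : ∀ n : ℕ, c + n ≠ 0)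
    (habc : a + b = c + n) (h : HasSum (fun m => coeff m (hypPowerSeries a b c) * z ^ m) S) :
    (1 - z) ^ n * S = hyp2F1 (c - a) (c - b) c z := by
  have hEuler := hasSum_coeff_one_sub_X_pow_mul h n
  rw [one_sub_X_pow_mul_hypPowerSeries hc habc] at hEuler
  simp only [hypPowerSeries, coeff_mk] at hEuler
  exact hEuler.tsum_eq.symm

end HypPowerSeries

theorem hyp2F1_neg_natCast (k : ℕ) (a c z : ℂ) : hyp2F1 a (-k) c z =
    ∑ m ∈ Finset.range (k + 1), ((ascPochhammer ℂ m).eval a * (ascPochhammer ℂ m).eval (-k : ℂ)) /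
      ((ascPochhammer ℂ m).eval c * (m ! : ℂ)) * z ^ m := by
  refine tsum_eq_sum fun m hm => ?_
  rw [Finset.mem_range, not_lt] at hm
  rw [ascPochhammer_eval_neg_eq_descPochhammer, descPochhammer_eval_coe_nat_of_lt hm]
  simp

theorem differentiable_hyp2F1_neg_natCast (k : ℕ) (a c : ℂ) :
    Differentiable ℂ (hyp2F1 a (-k) c) := by
  rw [funext (hyp2F1_neg_natCast k a c)]
  fun_prop

theorem exists_norm_hyp2F1_neg_natCast_le (k : ℕ) (a c : ℂ) (r : ℝ) :
    ∃ C : ℝ, 0 ≤ C ∧ ∀ z : ℂ, ‖z‖ ≤ r → ‖hyp2F1 a (-k) c z‖ ≤ C := by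
  obtain ⟨C, hC⟩ := (isCompact_closedBall (0 : ℂ) r).exists_bound_of_continuousOn
    (differentiable_hyp2F1_neg_natCast k a c).continuous.continuousOn
  exact ⟨max C 0, le_max_right _ _, fun z hz => (hC z (by simpa using hz)).trans (le_max_left _ _)⟩

/-! ### Laplace transforms of the modified Bessel function of the first kind -/

theorem integrableOn_rpow_mul_exp_neg_mul_id {s b : ℝ} (hs : -1 < s) (hb : 0 < b) :
    IntegrableOn (fun u : ℝ => u ^ s * Real.exp (-b * u)) (Ioi 0) := by
  simpa only [Real.rpow_one] using integrableOn_rpow_mul_exp_neg_mul_rpow hs one_pos hb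

/-- The density whose Mellin transform is `l ↦ 2 * (W / 2) ^ l * besselK l W`. -/
noncomputable def besselKDensity (W u : ℝ) : ℝ :=
  Real.exp (-u - W ^ 2 / 4 / u) / u

theorem continuousOn_besselKDensity (W : ℝ) : ContinuousOn (besselKDensity W) (Ioi 0) := by
  unfold besselKDensity
  fun_prop (disch := intro u hu; exact (mem_Ioi.mp hu).ne')

theorem integrableOn_norm_besselKDensity_mul (W : ℝ) {s d : ℝ} (hs : 0 < s) (hd : d < 1) :
    IntegrableOn (fun u => ‖(besselKDensity W u : ℂ)‖ * u ^ s * Real.exp (u * d)) (Ioi 0) := by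
  refine (integrableOn_rpow_mul_exp_neg_mul_id (s := s - 1) (b := 1 - d) (by linarith)
    (by linarith)).mono' ?_ ?_
  · have hrpow : ContinuousOn (fun u : ℝ => u ^ s) (Ioi 0) := fun u hu =>
      (Real.continuousAt_rpow_const u s (.inl (mem_Ioi.mp hu).ne')).continuousWithinAt
    exact (((Complex.continuous_ofReal.comp_continuousOn (continuousOn_besselKDensity W)).norm.mul
      hrpow).mul (by fun_prop)).aestronglyMeasurable measurableSet_Ioi
  · filter_upwards [ae_restrict_mem measurableSet_Ioi] with u hu
    have hu : 0 < u := hu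
    rw [Real.norm_of_nonneg (by positivity), Complex.norm_real, besselKDensity,
      Real.norm_of_nonneg (by positivity), Real.rpow_sub_one hu.ne']
    calc Real.exp (-u - W ^ 2 / 4 / u) / u * u ^ s * Real.exp (u * d)
        = u ^ s / u * Real.exp (-(1 - d) * u - W ^ 2 / 4 / u) := by
          rw [show -(1 - d) * u - W ^ 2 / 4 / u = -u - W ^ 2 / 4 / u + u * d by ring, Real.exp_add]
          ring
      _ ≤ u ^ s / u * Real.exp (-(1 - d) * u) := by
          gcongr
          exact sub_le_self _ (by positivity)

theorem integral_besselKDensity_mul_cpow {W : ℝ} (hW : 0 < W) (l : ℂ) :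
    ∫ u in Ioi (0 : ℝ), (besselKDensity W u : ℂ) * (u : ℂ) ^ l =
      2 * (W / 2 : ℂ) ^ l * besselK l W := by
  rw [← integral_exp_neg_sub_div_mul_cpow l hW]
  refine setIntegral_congr_fun measurableSet_Ioi fun u hu => ?_
  have hu0 : (u : ℂ) ≠ 0 := mod_cast (mem_Ioi.mp hu).ne'
  rw [Complex.cpow_sub _ _ hu0, Complex.cpow_one, besselKDensity]
  push_cast
  ring

theorem cpow_mul_besselK_recurrence {W : ℝ} (hW : 0 < W) (z : ℂ) :
    2 * (W / 2 : ℂ) ^ (z + 2) * besselK (z + 2) W -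
        (z + 1) * (2 * (W / 2 : ℂ) ^ (z + 1) * besselK (z + 1) W) =
      (W / 2 : ℂ) ^ 2 * (2 * (W / 2 : ℂ) ^ z * besselK z W) := by
  have hW0 : (W / 2 : ℂ) ≠ 0 := mod_cast (half_pos hW).ne'
  have hrec := mul_besselK_add_one (z + 1) (z := W) (by simpa using hW)
  rw [show z + 1 + 1 = z + 2 by ring, add_sub_cancel_right] at hrec
  rw [Complex.cpow_add _ _ hW0, Complex.cpow_add _ _ hW0, Complex.cpow_one, Complex.cpow_ofNat]
  linear_combination 2 * (W / 2 : ℂ) ^ z * (W / 2) * hrec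

section LaplaceTransform

variable {μ : ℂ} {w W A B : ℝ}

theorem integral_besselKDensity_mul_exp_mul_besselI (hμ : 0 < μ.re) (hw : 0 < w)
    (hw1 : w ^ 2 + 2 * w < 1) (hW : 0 < W) :
    ∫ u in Ioi (0 : ℝ), (besselKDensity W u : ℂ) *
        (Real.exp (-(u * w ^ 2)) * besselI μ (2 * u * w)) =
      2 * (besselI μ (w * W) * besselK μ W) := by
  have hwW : (w * W : ℂ) ≠ 0 := mod_cast (mul_pos hw hW).ne'
  have hsum := hasSum_laguerreMoment hμ hw
    (Complex.continuous_ofReal.comp_aestronglyMeasurable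
      ((continuousOn_besselKDensity W).aestronglyMeasurable measurableSet_Ioi))
    (integrableOn_norm_besselKDensity_mul W hμ hw1)
  simp only [integral_besselKDensity_mul_cpow hW, laguerreMoment_eq_pow_mul hμ
    (M := fun z => 2 * (W / 2 : ℂ) ^ z * besselK z W) (cpow_mul_besselK_recurrence hW)] at hsum
  have hseries := ((summable_besselISeries hμ (w * W)).hasSum.mul_left
    ((w * W / 2 : ℂ) ^ μ)).mul_left (2 * besselK μ W)
  rw [← besselISeries, ← besselI_eq_cpow_mul_besselISeries μ hwW] at hseries
  rw [mul_comm (besselI μ _), ← mul_assoc]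
  refine hsum.unique ?_
  convert! hseries using 1
  ext N
  have hcpow : (w * W / 2 : ℂ) ^ μ = (w : ℂ) ^ μ * (W / 2 : ℂ) ^ μ := by
    have := Complex.mul_cpow_ofReal_nonneg hw.le (half_pos hW).le μ
    push_cast at this
    rw [mul_div_assoc, this]
  rw [hcpow, mul_div_assoc (w : ℂ), mul_pow, pow_mul (W / 2 : ℂ)]
  ring

theorem integral_pow_mul_exp_neg_mul_cpow (k : ℕ) {l : ℂ} (hl : 0 < l.re) :
    ∫ u in Ioi (0 : ℝ), ((u ^ k * Real.exp (-u) : ℝ) : ℂ) * (u : ℂ) ^ l =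
      Complex.Gamma (l + (k + 1)) := by
  have hre : 0 < (l + (k + 1)).re := by
    simp only [Complex.add_re, Complex.natCast_re, Complex.one_re]
    positivity
  rw [Complex.Gamma_eq_integral hre, Complex.GammaIntegral]
  refine setIntegral_congr_fun measurableSet_Ioi fun u hu => ?_
  have hu0 : (u : ℂ) ≠ 0 := mod_cast (mem_Ioi.mp hu).ne'
  rw [show l + (k + 1) - 1 = l + k by ring, Complex.cpow_add _ _ hu0, Complex.cpow_natCast]
  push_cast
  ring

theorem laguerreMoment_pow_mul_exp_neg (hμ : 0 < μ.re) (k N : ℕ) :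
    laguerreMoment μ (fun z => ∫ u in Ioi (0 : ℝ),
        ((u ^ k * Real.exp (-u) : ℝ) : ℂ) * (u : ℂ) ^ z) N =
      Complex.Gamma (μ + k + 1) / Complex.Gamma (μ + 1) *
        PowerSeries.coeff N (hypPowerSeries (k + 1) (μ + k + 1) (μ + 1)) := by
  have hGamma : laguerreMoment μ (fun z => ∫ u in Ioi (0 : ℝ),
      ((u ^ k * Real.exp (-u) : ℝ) : ℂ) * (u : ℂ) ^ z) N =
      laguerreMoment μ (fun z => Complex.Gamma (z + (k + 1))) N := by
    refine Finset.sum_congr rfl fun x _ => ?_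
    beta_reduce
    rw [integral_pow_mul_exp_neg_mul_cpow]
    simp only [Complex.add_re, Complex.mul_re, Complex.natCast_re, Complex.natCast_im,
      Complex.re_ofNat, mul_zero, sub_zero]
    positivity
  have hpos (j : ℕ) : 0 < (μ + j + 1).re := by
    simp only [Complex.add_re, Complex.natCast_re, Complex.one_re]
    positivity
  have hk : 0 < ((k : ℂ) + 1).re := by
    simp only [Complex.add_re, Complex.natCast_re, Complex.one_re]
    positivity
  have hpoch {z : ℂ} (hz : 0 < z.re) : Complex.Gamma (z + N) =
      (ascPochhammer ℂ N).eval z * Complex.Gamma z := by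
    rw [← Complex.Gamma_add_nat_div_Gamma_eq z fun n h => ?_,
      div_mul_cancel₀ _ (Complex.Gamma_ne_zero_of_re_pos hz)]
    simp only [h, Complex.neg_re, Complex.natCast_re] at hz
    linarith [n.cast_nonneg (α := ℝ)]
  have hpos0 : 0 < (μ + 1).re := by simpa using hpos 0
  rw [hGamma, laguerreMoment_Gamma hμ hk, hypPowerSeries, PowerSeries.coeff_mk, ← add_assoc μ,
    add_right_comm μ N, hpoch (hpos k), hpoch hpos0]
  ring

theorem integrableOn_norm_pow_mul_exp_neg_mul (k : ℕ) {s d : ℝ} (hs : 0 < s) (hd : d < 1) :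
    IntegrableOn (fun u : ℝ => ‖((u ^ k * Real.exp (-u) : ℝ) : ℂ)‖ * u ^ s * Real.exp (u * d))
      (Ioi 0) := by
  refine (integrableOn_rpow_mul_exp_neg_mul_id (s := k + s) (b := 1 - d)
    (by linarith [k.cast_nonneg (α := ℝ)]) (by linarith)).congr_fun (fun u hu => ?_)
    measurableSet_Ioi
  have hu : 0 < u := hu
  beta_reduce
  rw [Complex.norm_real, Real.norm_of_nonneg (by positivity), Real.rpow_add hu, Real.rpow_natCast,
    show -(1 - d) * u = -u + u * d by ring, Real.exp_add]
  ring

theorem one_sub_sq_pow_mul_integral_pow_mul_exp_mul_besselI (hμ : 0 < μ.re) (hw : 0 < w)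
    (hw1 : w ^ 2 + 2 * w < 1) (k : ℕ) :
    (1 - (w : ℂ) ^ 2) ^ (2 * k + 1) * ∫ u in Ioi (0 : ℝ), ((u ^ k * Real.exp (-u) : ℝ) : ℂ) *
        (Real.exp (-(u * w ^ 2)) * besselI μ (2 * u * w)) =
      Complex.Gamma (μ + k + 1) / Complex.Gamma (μ + 1) * (w : ℂ) ^ μ *
        hyp2F1 (μ - k) (-k) (μ + 1) ((w : ℂ) ^ 2) := by
  have hw0 : (w : ℂ) ≠ 0 := mod_cast hw.ne'
  have hconst : Complex.Gamma (μ + k + 1) / Complex.Gamma (μ + 1) * (w : ℂ) ^ μ ≠ 0 :=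
    mul_ne_zero (div_ne_zero (Gamma_add_natCast_add_one_ne_zero hμ k)
      (by simpa using Gamma_add_natCast_add_one_ne_zero hμ 0))
      (by simp [Complex.cpow_eq_zero_iff, hw0])
  have hsum := hasSum_laguerreMoment hμ hw (ρ := fun u => ((u ^ k * Real.exp (-u) : ℝ) : ℂ))
    (by fun_prop) (integrableOn_norm_pow_mul_exp_neg_mul k hμ hw1)
  have hterm (N : ℕ) : (w : ℂ) ^ μ * (w : ℂ) ^ (2 * N) *
      (Complex.Gamma (μ + k + 1) / Complex.Gamma (μ + 1) *
        PowerSeries.coeff N (hypPowerSeries (k + 1) (μ + k + 1) (μ + 1))) =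
      Complex.Gamma (μ + k + 1) / Complex.Gamma (μ + 1) * (w : ℂ) ^ μ *
        (PowerSeries.coeff N (hypPowerSeries (k + 1) (μ + k + 1) (μ + 1)) * ((w : ℂ) ^ 2) ^ N) := by
    rw [pow_mul]
    ring
  simp only [laguerreMoment_pow_mul_exp_neg hμ, hterm] at hsum
  have hcoeff := hsum.mul_left (Complex.Gamma (μ + k + 1) / Complex.Gamma (μ + 1) * (w : ℂ) ^ μ)⁻¹
  simp only [inv_mul_cancel_left₀ hconst] at hcoeff
  have hc (n : ℕ) : μ + 1 + n ≠ 0 := Complex.ne_zero_of_re_pos (by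
    simp only [Complex.add_re, Complex.natCast_re, Complex.one_re]
    positivity)
  have hEuler := hasSum_coeff_hypPowerSeries_of_add_eq (n := 2 * k + 1) hc
    (by push_cast; ring) hcoeff
  rw [show μ + 1 - (k + 1) = μ - k by ring, show μ + 1 - (μ + k + 1) = -k by ring] at hEuler
  rw [← hEuler, mul_left_comm, mul_inv_cancel_left₀ hconst]

theorem integral_mul_exp_mul_besselI_eq (μ : ℂ) (g : ℝ → ℂ) (hAB : 0 < A + B) :
    ∫ v in Ioi (0 : ℝ), g v * (Real.exp (-(A ^ 2 + B ^ 2) * v) * besselI μ ((A ^ 2 - B ^ 2) * v)) =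
      2 / (A + B : ℂ) ^ 2 * ∫ u in Ioi (0 : ℝ), g (2 / (A + B) ^ 2 * u) * Real.exp (-u) *
        (Real.exp (-(u * ((A - B) / (A + B)) ^ 2)) *
          besselI μ (2 * u * ((A - B) / (A + B) : ℝ))) := by
  have hc : 0 < 2 / (A + B) ^ 2 := by positivity
  have hAB0 : (A + B : ℂ) ≠ 0 := mod_cast hAB.ne'
  have hsub := integral_comp_mul_left_Ioi (fun v : ℝ => g v *
    (Real.exp (-(A ^ 2 + B ^ 2) * v) * besselI μ ((A ^ 2 - B ^ 2) * v))) 0 hc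
  rw [mul_zero, eq_inv_smul_iff₀ hc.ne'] at hsub
  rw [← hsub, Complex.real_smul]
  push_cast
  congr 1
  refine setIntegral_congr_fun measurableSet_Ioi fun u _ => ?_
  have harg : (A ^ 2 - B ^ 2 : ℂ) * (2 / (A + B) ^ 2 * u) = 2 * u * ((A - B) / (A + B)) := by
    field_simp
    ring
  have hexp : -(A ^ 2 + B ^ 2 : ℂ) * (2 / (A + B) ^ 2 * u) =
      -u + -(u * ((A - B) / (A + B)) ^ 2) := by
    field_simp
    ring
  rw [harg, hexp, Complex.exp_add]
  ring

theorem div_sq_add_two_mul_lt_one (hBA : B < A) (hAB : A < 2 * B) :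
    ((A - B) / (A + B)) ^ 2 + 2 * ((A - B) / (A + B)) < 1 := by
  have hpos : 0 < (A - B) / (A + B) := div_pos (by linarith) (by linarith)
  have hlt : (A - B) / (A + B) < 1 / 3 := by
    rw [div_lt_div_iff₀ (by linarith) (by norm_num)]
    linarith
  nlinarith

theorem integral_exp_div_mul_exp_mul_besselI (hμ : 0 < μ.re) (hBA : B < A) (hAB : A < 2 * B)
    {s : ℝ} (hs : 0 < s) :
    ∫ v in Ioi (0 : ℝ), ((Real.exp (-(s ^ 2 / (2 * v))) / v : ℝ) : ℂ) *
        (Real.exp (-(A ^ 2 + B ^ 2) * v) * besselI μ ((A ^ 2 - B ^ 2) * v)) =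
      2 * (besselI μ (s * (A - B)) * besselK μ (s * (A + B))) := by
  have hsum : 0 < A + B := by linarith
  have hsum0 : (A + B : ℂ) ≠ 0 := mod_cast hsum.ne'
  have hIK := integral_besselKDensity_mul_exp_mul_besselI hμ
    (div_pos (sub_pos.mpr hBA) hsum) (div_sq_add_two_mul_lt_one hBA hAB) (mul_pos hs hsum)
  have harg : (((A - B) / (A + B) : ℝ) : ℂ) * ((s * (A + B) : ℝ) : ℂ) = s * (A - B) := by
    push_cast
    field_simp
  have hdensity {u : ℝ} (hu : 0 < u) : 2 / (A + B) ^ 2 *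
      (Real.exp (-(s ^ 2 / (2 * (2 / (A + B) ^ 2 * u)))) / (2 / (A + B) ^ 2 * u) * Real.exp (-u)) =
      besselKDensity (s * (A + B)) u := by
    rw [besselKDensity, sub_eq_add_neg, Real.exp_add,
      show s ^ 2 / (2 * (2 / (A + B) ^ 2 * u)) = (s * (A + B)) ^ 2 / 4 / u by field_simp; ring]
    field_simp
  rw [harg, Complex.ofReal_mul, Complex.ofReal_add] at hIK
  rw [integral_mul_exp_mul_besselI_eq μ _ hsum, ← hIK, ← integral_const_mul]
  refine setIntegral_congr_fun measurableSet_Ioi fun u hu => ?_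
  rw [← hdensity hu]
  push_cast
  ring

theorem two_div_add_sq_pow_succ {A B : ℂ} (hA0 : A ≠ 0) (hB0 : B ≠ 0) (hAB0 : A + B ≠ 0) (k : ℕ) :
    (2 / (A + B) ^ 2) ^ (k + 1) = 1 / 2 ^ (3 * k + 1) * (1 / (A * B)) *
      (1 / A + 1 / B) ^ (2 * k) * (2 * (2 / (A + B) ^ 2) * (A * B)) ^ (2 * k + 1) := by
  have hsq : (1 / A + 1 / B) ^ 2 * (2 * (2 / (A + B) ^ 2) * (A * B)) ^ 2 =
      8 * (2 / (A + B) ^ 2) := by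
    field_simp
    ring
  rw [pow_succ _ (2 * k), pow_mul, pow_mul _ 2 k, mul_assoc, ← mul_assoc (_ ^ k), ← mul_pow, hsq,
    mul_pow, pow_succ 2 (3 * k), pow_mul, pow_succ _ k]
  norm_num
  field_simp

/-- The summand on the hypergeometric side, as a function of `A = √(4n + α)`, `B = √(4n + β)`:
up to a constant, the Laplace transform of `v ^ k * besselI μ ((A ^ 2 - B ^ 2) * v)` at
`A ^ 2 + B ^ 2`. -/
noncomputable def laplaceTerm (k : ℕ) (μ A B : ℂ) : ℂ :=
  1 / (A * B) * ((A - B) / (A + B)) ^ μ * (1 / A + 1 / B) ^ (2 * k) *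
    hyp2F1 (μ - k) (-k) (μ + 1) (((A - B) / (A + B)) ^ 2)

theorem integral_pow_mul_exp_mul_besselI (hμ : 0 < μ.re) (hBA : B < A) (hAB : A < 2 * B) (k : ℕ) :
    ∫ v in Ioi (0 : ℝ), (v : ℂ) ^ k *
        (Real.exp (-(A ^ 2 + B ^ 2) * v) * besselI μ ((A ^ 2 - B ^ 2) * v)) =
      Complex.Gamma (μ + k + 1) / Complex.Gamma (μ + 1) / 2 ^ (3 * k + 1) *
        laplaceTerm k μ A B := by
  have hA0 : (A : ℂ) ≠ 0 := mod_cast (by linarith : 0 < A).ne'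
  have hB0 : (B : ℂ) ≠ 0 := mod_cast (by linarith : 0 < B).ne'
  have hsum : 0 < A + B := by linarith
  have hsum0 : (A + B : ℂ) ≠ 0 := mod_cast hsum.ne'
  have hJ := one_sub_sq_pow_mul_integral_pow_mul_exp_mul_besselI hμ
    (div_pos (sub_pos.mpr hBA) hsum) (div_sq_add_two_mul_lt_one hBA hAB) k
  set J := ∫ u in Ioi (0 : ℝ), ((u ^ k * Real.exp (-u) : ℝ) : ℂ) *
    (Real.exp (-(u * ((A - B) / (A + B)) ^ 2)) * besselI μ (2 * u * ((A - B) / (A + B) : ℝ)))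
  have hI : ∫ v in Ioi (0 : ℝ), (v : ℂ) ^ k *
      (Real.exp (-(A ^ 2 + B ^ 2) * v) * besselI μ ((A ^ 2 - B ^ 2) * v)) =
      (2 / (A + B : ℂ) ^ 2) ^ (k + 1) * J := by
    rw [integral_mul_exp_mul_besselI_eq μ _ hsum, pow_succ' _ k, mul_assoc,
      ← integral_const_mul ((2 / (A + B : ℂ) ^ 2) ^ k)]
    congr 1
    refine setIntegral_congr_fun measurableSet_Ioi fun u _ => ?_
    push_cast
    ring
  have hw : 1 - ((A - B) / (A + B) : ℂ) ^ 2 = 2 * (2 / (A + B) ^ 2) * (A * B) := by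
    field_simp
    ring
  push_cast at hJ
  rw [hw] at hJ
  rw [hI, two_div_add_sq_pow_succ hA0 hB0 hsum0, mul_assoc _ _ J, hJ, laplaceTerm]
  ring

end LaplaceTransform

/-! ### Summation over a modular sequence -/

section Exchange

theorem tsum_mul_integral_mul {X : Type*} [MeasurableSpace X] {P : Measure X} {c : ℕ → ℂ}
    {f : ℕ → X → ℂ} {g : X → ℂ} {d : ℕ → ℝ} {h : X → ℝ}
    (hf : ∀ n, AEStronglyMeasurable (f n) P) (hg : AEStronglyMeasurable g P)
    (hfh : ∀ n, ∀ᵐ x ∂P, ‖f n x‖ ≤ d n * h x) (hd : Summable fun n => ‖c n‖ * d n)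
    (hh : Integrable (fun x => h x * ‖g x‖) P) :
    ∑' n, c n * ∫ x, f n x * g x ∂P = ∫ x, (∑' n, c n * f n x) * g x ∂P := by
  have hbound (n : ℕ) : ∀ᵐ x ∂P, ‖c n * (f n x * g x)‖ ≤ ‖c n‖ * d n * (h x * ‖g x‖) := by
    filter_upwards [hfh n] with x hx
    rw [norm_mul, norm_mul, mul_assoc, ← mul_assoc (d n)]
    gcongr
  have hsum := hasSum_integral_of_dominated_convergence
    (fun n x => ‖c n‖ * d n * (h x * ‖g x‖)) (fun n => ((hf n).mul hg).const_mul (c n)) hbound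
    (ae_of_all _ fun x => hd.mul_right _) (by simpa only [tsum_mul_right] using hh.const_mul _)
    ((ae_all_iff.mpr hbound).mono fun x hx => (Summable.of_norm_bounded (hd.mul_right _) hx).hasSum)
  simp only [integral_const_mul, Pi.mul_apply] at hsum
  rw [hsum.tsum_eq]
  simp only [← mul_assoc, tsum_mul_right]

theorem exp_neg_le_factorial_div_pow {x : ℝ} (hx : 0 < x) (k : ℕ) :
    Real.exp (-x) ≤ k ! / x ^ k := by
  rw [Real.exp_neg, inv_le_comm₀ (Real.exp_pos x) (by positivity), inv_div]
  exact Real.pow_div_factorial_le_exp x hx.le k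

theorem exp_neg_div_div_le (k n : ℕ) {v : ℝ} (hv : 0 < v) :
    Real.exp (-(π ^ 2 * (n + 1) / (2 * v))) / v ≤
      (k + 1)! * 2 ^ (k + 1) / ((n : ℝ) + 1) ^ k * v ^ k := by
  have hpi : 1 ≤ π ^ 2 := one_le_pow₀ (by linarith [Real.pi_gt_three])
  have hn : (1 : ℝ) ≤ n + 1 := by simp
  calc Real.exp (-(π ^ 2 * (n + 1) / (2 * v))) / v
      ≤ Real.exp (-(1 * (n + 1) / (2 * v))) / v := by gcongr
    _ ≤ (k + 1)! / (1 * (n + 1) / (2 * v)) ^ (k + 1) / v := by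
        gcongr
        exact exp_neg_le_factorial_div_pow (by positivity) (k + 1)
    _ = (k + 1)! * 2 ^ (k + 1) / ((n : ℝ) + 1) ^ (k + 1) * v ^ k := by
        rw [one_mul, div_pow, mul_pow, pow_succ v]
        field_simp
    _ ≤ (k + 1)! * 2 ^ (k + 1) / ((n : ℝ) + 1) ^ k * v ^ k := by
        gcongr
        exact k.le_succ

theorem pow_mul_exp_neg_le (k n : ℕ) {v : ℝ} (hv : 0 < v) :
    v ^ k * Real.exp (-(8 * (n + 1) * v)) ≤ k ! / ((n : ℝ) + 1) ^ k := by
  calc v ^ k * Real.exp (-(8 * (n + 1) * v))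
      ≤ v ^ k * Real.exp (-(1 * (n + 1) * v)) := by
        gcongr
        norm_num
    _ ≤ v ^ k * (k ! / (1 * (n + 1) * v) ^ k) := by
        gcongr
        exact exp_neg_le_factorial_div_pow (by positivity) k
    _ = k ! / ((n : ℝ) + 1) ^ k := by
        rw [one_mul, mul_pow]
        field_simp

theorem IsModularSequence.summable_norm_mul_div {k : ℕ} {ε : ℂ} {c : ℕ → ℂ}
    (hc : IsModularSequence k ε c) (D : ℝ) :
    Summable fun n : ℕ => ‖c (n + 1)‖ * (D / ((n : ℝ) + 1) ^ k) := by
  simpa only [mul_div_left_comm] using hc.summable_norm_div.mul_left D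

/-- The modular relation at `y = 4 v / π`. -/
theorem IsModularSequence.tsum_exp_div {k : ℕ} {ε : ℂ} {c : ℕ → ℂ} (hc : IsModularSequence k ε c)
    {v : ℝ} (hv : 0 < v) :
    ∑' n, c (n + 1) * ((Real.exp (-(π ^ 2 * (n + 1) / (2 * v))) / v : ℝ) : ℂ) =
      ε * (4 / π) ^ (k + 1) *
        ∑' n, c (n + 1) * ((v ^ k * Real.exp (-(8 * (n + 1) * v)) : ℝ) : ℂ) := by
  have hv0 : (v : ℂ) ≠ 0 := mod_cast hv.ne'
  have hmod := hc.tsum_exp_inv (4 * v / π) (by positivity)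
  have hleft (n : ℕ) : 2 * π * (n + 1) / (4 * v / π) = π ^ 2 * (n + 1) / (2 * v) := by
    field_simp
    norm_num
  have hright (n : ℕ) : 2 * π * (n + 1) * (4 * v / π) = 8 * (n + 1) * v := by
    field_simp
    norm_num
  simp only [hleft, hright] at hmod
  simp only [Complex.ofReal_div _ v, Complex.ofReal_mul (v ^ k), ← mul_div_assoc,
    mul_left_comm _ ((v ^ k : ℝ) : ℂ), tsum_mul_left, tsum_div_const, hmod]
  push_cast
  rw [mul_div_right_comm 4 (v : ℂ), mul_pow, pow_succ (v : ℂ)]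
  field_simp

theorem IsModularSequence.tsum_mul_integral_exp_div {k : ℕ} {ε : ℂ} {c : ℕ → ℂ}
    (hc : IsModularSequence k ε c) {g : ℝ → ℂ}
    (hg : ∀ j : ℕ, IntegrableOn (fun v : ℝ => (v : ℂ) ^ j * g v) (Ioi 0)) :
    ∑' n, c (n + 1) * ∫ v in Ioi (0 : ℝ),
        ((Real.exp (-(π ^ 2 * (n + 1) / (2 * v))) / v : ℝ) : ℂ) * g v =
      ε * (4 / π) ^ (k + 1) * ∑' n, c (n + 1) * ∫ v in Ioi (0 : ℝ),
        ((v ^ k * Real.exp (-(8 * (n + 1) * v)) : ℝ) : ℂ) * g v := by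
  have hgm : AEStronglyMeasurable g (volume.restrict (Ioi 0)) := by
    simpa using (hg 0).aestronglyMeasurable
  have hgn (j : ℕ) : IntegrableOn (fun v : ℝ => |v| ^ j * ‖g v‖) (Ioi 0) := by
    simpa [IntegrableOn] using (hg j).norm
  rw [tsum_mul_integral_mul (h := fun v => |v| ^ k) (fun n => Measurable.aestronglyMeasurable
      (by fun_prop)) hgm (fun n => ?_) (hc.summable_norm_mul_div ((k + 1)! * 2 ^ (k + 1))) (hgn k),
    tsum_mul_integral_mul (h := fun v => |v| ^ 0) (fun n => Measurable.aestronglyMeasurable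
      (by fun_prop)) hgm (fun n => ?_) (hc.summable_norm_mul_div k !) (hgn 0),
    ← integral_const_mul]
  · refine setIntegral_congr_fun measurableSet_Ioi fun v hv => ?_
    rw [hc.tsum_exp_div hv, mul_assoc]
  all_goals
    filter_upwards [ae_restrict_mem measurableSet_Ioi] with v hv
    have hv : 0 < v := hv
    rw [Complex.norm_real, Real.norm_of_nonneg (by positivity), abs_of_pos hv]
  · simpa using pow_mul_exp_neg_le k n hv
  · exact exp_neg_div_div_le k n hv

end Exchange

section RealSummation

variable {μ : ℂ} {a b : ℝ}

theorem integrableOn_pow_mul_exp_mul_besselI (hμ : 0 < μ.re) (hb : 0 < b) (hba : b < a) (j : ℕ) :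
    IntegrableOn (fun v : ℝ => (v : ℂ) ^ j *
      (Real.exp (-(a ^ 2 + b ^ 2) * v) * besselI μ ((a ^ 2 - b ^ 2) * v))) (Ioi 0) := by
  obtain ⟨C, -, hCI⟩ := exists_norm_besselI_le hμ
  have hsq : 0 < a ^ 2 - b ^ 2 := by nlinarith
  have hre {v : ℝ} (hv : 0 < v) : 0 < ((a ^ 2 - b ^ 2 : ℂ) * v).re := by
    norm_cast
    positivity
  refine ((integrableOn_rpow_mul_exp_neg_mul_id (s := j + μ.re) (b := 2 * b ^ 2)
    (by linarith [j.cast_nonneg (α := ℝ)]) (by positivity)).const_mul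
      (C * (a ^ 2 - b ^ 2) ^ μ.re)).mono' ?_ ?_
  · have hI : ContinuousOn (fun v : ℝ => besselI μ ((a ^ 2 - b ^ 2) * v)) (Ioi 0) := fun v hv =>
      ((differentiableAt_besselI hμ (hre hv)).continuousAt.comp
        (f := fun v : ℝ => ((a ^ 2 - b ^ 2) * v : ℂ)) (by fun_prop)).continuousWithinAt
    exact (by fun_prop : ContinuousOn _ _).aestronglyMeasurable measurableSet_Ioi
  · filter_upwards [ae_restrict_mem measurableSet_Ioi] with v hv
    have hv : 0 < v := hv
    have hI := hCI _ (hre hv)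
    norm_cast at hI ⊢
    rw [Real.norm_of_nonneg (by positivity), Real.mul_rpow hsq.le hv.le] at hI
    rw [norm_mul, norm_mul, Complex.norm_real, Complex.norm_real,
      Real.norm_of_nonneg (by positivity), Real.norm_of_nonneg (by positivity)]
    calc v ^ j * (Real.exp (-(a ^ 2 + b ^ 2) * v) * ‖besselI μ ((a ^ 2 - b ^ 2) * v : ℝ)‖)
        ≤ v ^ j * (Real.exp (-(a ^ 2 + b ^ 2) * v) *
          (C * ((a ^ 2 - b ^ 2) ^ μ.re * v ^ μ.re) * Real.exp ((a ^ 2 - b ^ 2) * v))) := by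
          gcongr
      _ = C * (a ^ 2 - b ^ 2) ^ μ.re * (v ^ (j + μ.re) * Real.exp (-(2 * b ^ 2) * v)) := by
          rw [Real.rpow_add hv, Real.rpow_natCast, show -(2 * b ^ 2) * v =
            -(a ^ 2 + b ^ 2) * v + (a ^ 2 - b ^ 2) * v by ring, Real.exp_add]
          ring

theorem integral_pow_mul_exp_mul_exp_mul_besselI (hμ : 0 < μ.re) (hba : b < a) (hab : a < 2 * b)
    (k : ℕ) {x : ℝ} (hx : 0 ≤ x) :
    ∫ v in Ioi (0 : ℝ), ((v ^ k * Real.exp (-(2 * x * v)) : ℝ) : ℂ) *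
        (Real.exp (-(a ^ 2 + b ^ 2) * v) * besselI μ ((a ^ 2 - b ^ 2) * v)) =
      Complex.Gamma (μ + k + 1) / Complex.Gamma (μ + 1) / 2 ^ (3 * k + 1) *
        laplaceTerm k μ (√(x + a ^ 2) : ℝ) (√(x + b ^ 2) : ℝ) := by
  have hb : 0 < b := by linarith
  have ha : 0 < a := hb.trans hba
  have hA := Real.sq_sqrt (show 0 ≤ x + a ^ 2 by positivity)
  have hB := Real.sq_sqrt (show 0 ≤ x + b ^ 2 by positivity)
  have hAB : √(x + a ^ 2) < 2 * √(x + b ^ 2) := by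
    rw [Real.sqrt_lt' (by positivity), mul_pow, hB]
    nlinarith
  rw [← integral_pow_mul_exp_mul_besselI hμ
    (Real.sqrt_lt_sqrt (by positivity) (by gcongr)) hAB]
  refine setIntegral_congr_fun measurableSet_Ioi fun v _ => ?_
  have hexp : -(√(x + a ^ 2) ^ 2 + √(x + b ^ 2) ^ 2) * v =
      -(2 * x * v) + -(a ^ 2 + b ^ 2) * v := by
    rw [hA, hB]
    ring
  have harg : ((√(x + a ^ 2) : ℝ) : ℂ) ^ 2 - ((√(x + b ^ 2) : ℝ) : ℂ) ^ 2 = a ^ 2 - b ^ 2 := by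
    rw [← Complex.ofReal_pow, hA, ← Complex.ofReal_pow, hB]
    push_cast
    ring
  rw [hexp, harg, Real.exp_add]
  push_cast
  ring

theorem tsum_besselI_mul_besselK_ofReal {k : ℕ} {ε : ℂ} {c : ℕ → ℂ} (hc : IsModularSequence k ε c)
    (hμ : 0 < μ.re) (hba : b < a) (hab : a < 2 * b) :
    ∑' n : ℕ, c (n + 1) * (besselI μ ((π * √(n + 1) : ℝ) * (a - b)) *
        besselK μ ((π * √(n + 1) : ℝ) * (a + b))) =
      ε * (2 / (2 * π) ^ (k + 1) * (Complex.Gamma (μ + k + 1) / Complex.Gamma (μ + 1))) *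
        ∑' n : ℕ, c (n + 1) * laplaceTerm k μ
          (√(4 * (n + 1) + a ^ 2) : ℝ) (√(4 * (n + 1) + b ^ 2) : ℝ) := by
  have hexchange := hc.tsum_mul_integral_exp_div
    (integrableOn_pow_mul_exp_mul_besselI hμ (by linarith : 0 < b) hba)
  have hleft (n : ℕ) : ∫ v in Ioi (0 : ℝ),
      ((Real.exp (-(π ^ 2 * (n + 1) / (2 * v))) / v : ℝ) : ℂ) *
        (Real.exp (-(a ^ 2 + b ^ 2) * v) * besselI μ ((a ^ 2 - b ^ 2) * v)) =
      2 * (besselI μ ((π * √(n + 1) : ℝ) * (a - b)) *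
        besselK μ ((π * √(n + 1) : ℝ) * (a + b))) := by
    rw [← integral_exp_div_mul_exp_mul_besselI hμ hba hab (by positivity : 0 < π * √(n + 1)),
      mul_pow, Real.sq_sqrt (by positivity)]
  have hright (n : ℕ) := integral_pow_mul_exp_mul_exp_mul_besselI hμ hba hab k
    (x := 4 * (n + 1)) (by positivity)
  simp only [show ∀ n : ℕ, 2 * (4 * ((n : ℝ) + 1)) = 8 * (n + 1) from fun n => by ring] at hright
  simp only [hleft, hright, mul_left_comm (c _) 2, mul_left_comm (c _) (_ / _ / _),
    tsum_mul_left] at hexchange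
  have hpi : (π : ℂ) ≠ 0 := mod_cast Real.pi_ne_zero
  have hconst : (4 / π : ℂ) ^ (k + 1) / 2 ^ (3 * k + 1) = 2 * (2 / (2 * π) ^ (k + 1)) := by
    rw [show (4 : ℂ) = 2 ^ 2 by norm_num, div_pow, mul_pow, ← pow_mul]
    field_simp
    ring
  linear_combination hexchange / 2 + ε * (Complex.Gamma (μ + k + 1) / Complex.Gamma (μ + 1)) *
    (∑' n : ℕ, c (n + 1) * laplaceTerm k μ
      (√(4 * (n + 1) + a ^ 2) : ℝ) (√(4 * (n + 1) + b ^ 2) : ℝ)) / 2 * hconst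

end RealSummation

/-! ### The square roots `√(x + a ^ 2)` -/

section ShiftedSquareRoot

variable {x δ R : ℝ} {a b : ℂ}

theorem csqrt_eq_cpow_inv_two (z : ℂ) : csqrt z = z ^ (2⁻¹ : ℂ) := by
  rw [csqrt, one_div]

theorem csqrt_sq (z : ℂ) : csqrt z ^ 2 = z := by
  rw [csqrt_eq_cpow_inv_two]
  exact Complex.cpow_ofNat_inv_pow z 2

theorem csqrt_sq_of_re_pos (ha : 0 < a.re) : csqrt (a ^ 2) = a := by
  rw [csqrt_eq_cpow_inv_two, Complex.sq_cpow_two_inv ha]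

theorem csqrt_ofReal (hx : 0 ≤ x) : csqrt (x : ℂ) = (√x : ℝ) := by
  rw [csqrt, Real.sqrt_eq_rpow, Complex.ofReal_cpow hx]
  norm_num

theorem two_mul_re_sq (a : ℂ) : 2 * a.re ^ 2 = ‖a ^ 2‖ + (a ^ 2).re := by
  rw [norm_pow, Complex.sq_norm, Complex.normSq_apply, sq a, Complex.mul_re]
  ring

theorem norm_sq_le_norm_ofReal_add_sq_add (hx : 0 ≤ x) (a : ℂ) :
    ‖a ^ 2‖ ≤ ‖(x : ℂ) + a ^ 2‖ + x := by
  have hsub := norm_sub_le ((x : ℂ) + a ^ 2) x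
  rwa [add_sub_cancel_left, Complex.norm_real, Real.norm_of_nonneg hx] at hsub

theorem re_le_re_csqrt (hx : 0 ≤ x) (a : ℂ) : a.re ≤ (csqrt (x + a ^ 2)).re := by
  rw [csqrt_eq_cpow_inv_two, Complex.cpow_inv_two_re]
  apply Real.le_sqrt_of_sq_le
  rw [Complex.add_re, Complex.ofReal_re]
  linarith [two_mul_re_sq a, norm_sq_le_norm_ofReal_add_sq_add hx a]

theorem ofReal_add_sq_mem_slitPlane (hx : 0 ≤ x) (ha : 0 < a.re) :
    (x : ℂ) + a ^ 2 ∈ Complex.slitPlane := by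
  rw [Complex.mem_slitPlane_iff]
  by_cases h : a.im = 0
  · left
    simp only [Complex.add_re, Complex.ofReal_re, sq, Complex.mul_re, h]
    nlinarith
  · right
    simp only [Complex.add_im, Complex.ofReal_im, sq, Complex.mul_im, zero_add, ← two_mul,
      mul_comm a.im]
    exact mul_ne_zero two_ne_zero (mul_ne_zero ha.ne' h)

theorem mul_le_norm_ofReal_add_sq (hx : 0 ≤ x) (hδ : 0 < δ) (ha : δ ≤ a.re) (haR : ‖a‖ ≤ R) :
    δ ^ 2 / (R ^ 2 + δ ^ 2) * x ≤ ‖(x : ℂ) + a ^ 2‖ := by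
  have hlarge : x - R ^ 2 ≤ ‖(x : ℂ) + a ^ 2‖ := by
    have hsub := norm_sub_le ((x : ℂ) + a ^ 2) (a ^ 2)
    rw [add_sub_cancel_right, Complex.norm_real, Real.norm_of_nonneg hx, norm_pow] at hsub
    linarith [pow_le_pow_left₀ (norm_nonneg a) haR 2]
  have hsmall : δ ^ 2 ≤ ‖(x : ℂ) + a ^ 2‖ := by
    rw [← csqrt_sq ((x : ℂ) + a ^ 2), norm_pow]
    gcongr
    exact (ha.trans (re_le_re_csqrt hx a)).trans (Complex.re_le_norm _)
  rw [div_mul_eq_mul_div, div_le_iff₀ (by positivity)]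
  nlinarith [sq_nonneg R, sq_nonneg δ]

theorem norm_sub_div_add_csqrt_le (hx : 0 ≤ x) (hδ : 0 < δ) (ha : δ ≤ a.re) (hb : δ ≤ b.re)
    (haR : ‖a‖ ≤ R) (hbR : ‖b‖ ≤ R) :
    ‖(csqrt (x + a ^ 2) - csqrt (x + b ^ 2)) / (csqrt (x + a ^ 2) + csqrt (x + b ^ 2))‖ ≤
      (R ^ 2 + R ^ 2) / (δ + δ) ^ 2 := by
  have hA := ha.trans (re_le_re_csqrt hx a)
  have hB := hb.trans (re_le_re_csqrt hx b)
  have hsub : csqrt (x + a ^ 2) ^ 2 - csqrt (x + b ^ 2) ^ 2 = a ^ 2 - b ^ 2 := by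
    rw [csqrt_sq, csqrt_sq, add_sub_add_left_eq_sub]
  generalize csqrt (x + a ^ 2) = A at *
  generalize csqrt (x + b ^ 2) = B at *
  have hre : δ + δ ≤ (A + B).re := by
    rw [Complex.add_re]
    exact add_le_add hA hB
  have hne : A + B ≠ 0 := Complex.ne_zero_of_re_pos (by linarith)
  have hquot : (A - B) / (A + B) = (a ^ 2 - b ^ 2) / (A + B) ^ 2 := by
    rw [← hsub, sq_sub_sq, sq (A + B), mul_div_mul_left _ _ hne]
  rw [hquot, norm_div, norm_pow]
  gcongr
  · refine (norm_sub_le _ _).trans ?_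
    rw [norm_pow, norm_pow]
    gcongr
  · exact hre.trans (Complex.re_le_norm _)

theorem sub_div_add_mem_slitPlane {A B : ℂ} (hA : 0 < A.re) (hB : 0 < B.re)
    (h : ∀ r : ℝ, 0 < r → r ≤ 1 → A ≠ r * B) : (A - B) / (A + B) ∈ Complex.slitPlane := by
  by_contra hw
  rw [Complex.mem_slitPlane_iff, not_or, not_lt, not_not] at hw
  set t := -((A - B) / (A + B)).re with ht
  have ht0 : 0 ≤ t := by linarith [hw.1]
  have htw : (A - B) / (A + B) = (-t : ℝ) := Complex.ext (by simp [ht]) (by simpa using hw.2)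
  have hAB : A + B ≠ 0 := Complex.ne_zero_of_re_pos (by rw [Complex.add_re]; positivity)
  rw [div_eq_iff hAB] at htw
  have hprop : ((1 + t : ℝ) : ℂ) * A = ((1 - t : ℝ) : ℂ) * B := by
    push_cast at htw ⊢
    linear_combination htw
  have ht1 : 0 < 1 - t := by
    have hre := congrArg Complex.re hprop
    rw [Complex.re_ofReal_mul, Complex.re_ofReal_mul] at hre
    exact pos_of_mul_pos_left (hre ▸ by positivity) hB.le
  refine h ((1 - t) / (1 + t)) (by positivity) ((div_le_one (by positivity)).mpr (by linarith)) ?_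
  have ht0' : ((1 + t : ℝ) : ℂ) ≠ 0 := mod_cast (by positivity : 1 + t ≠ 0)
  rw [Complex.ofReal_div, div_mul_eq_mul_div, eq_div_iff ht0', mul_comm A, hprop]

theorem sub_div_add_csqrt_mem_slitPlane (hx : 0 ≤ x) (hb : 0 < b.re) (hab : b.re < a.re) :
    (csqrt (x + a ^ 2) - csqrt (x + b ^ 2)) / (csqrt (x + a ^ 2) + csqrt (x + b ^ 2)) ∈
      Complex.slitPlane := by
  refine sub_div_add_mem_slitPlane ((hb.trans hab).trans_le (re_le_re_csqrt hx a))
    (hb.trans_le (re_le_re_csqrt hx b)) fun r hr hr1 hAB => hab.not_ge ?_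
  have hsq : (((1 - r ^ 2) * x : ℝ) : ℂ) + a ^ 2 = (r * b) ^ 2 := by
    have hAB2 := congrArg (· ^ 2) hAB
    simp only [mul_pow, csqrt_sq] at hAB2
    push_cast
    linear_combination hAB2
  have hrb : 0 < (r * b : ℂ).re := by
    rw [Complex.re_ofReal_mul]
    positivity
  have hle := re_le_re_csqrt (x := (1 - r ^ 2) * x)
    (mul_nonneg (by nlinarith) hx) a
  rw [hsq, csqrt_sq_of_re_pos hrb, Complex.re_ofReal_mul] at hle
  nlinarith

theorem differentiableAt_csqrt_ofReal_add_sq (hx : 0 ≤ x) (ha : 0 < a.re) :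
    DifferentiableAt ℂ (fun a : ℂ => csqrt (x + a ^ 2)) a := by
  have hsq : DifferentiableAt ℂ (fun a : ℂ => x + a ^ 2) a := by fun_prop
  exact hsq.cpow_const (ofReal_add_sq_mem_slitPlane hx ha)

end ShiftedSquareRoot

/-! ### Analytic continuation -/

section SummationDomain

variable {μ : ℂ} {ρ δ : ℝ}

/-- The range of the parameters `(√α, √β)`. -/
def summationDomain : Set (ℂ × ℂ) :=
  {p | 0 < p.2.re ∧ p.2.re < p.1.re}

/-- The summand on the Bessel side at `p = (√α, √β)`, where `s = π √n`. -/
noncomputable def besselProduct (μ : ℂ) (s : ℝ) (p : ℂ × ℂ) : ℂ :=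
  besselI μ (s * (p.1 - p.2)) * besselK μ (s * (p.1 + p.2))

/-- The summand on the hypergeometric side at `p = (√α, √β)`, where `x = 4 n`. -/
noncomputable def shiftedLaplaceTerm (k : ℕ) (μ : ℂ) (x : ℝ) (p : ℂ × ℂ) : ℂ :=
  laplaceTerm k μ (csqrt (x + p.1 ^ 2)) (csqrt (x + p.2 ^ 2))

theorem isOpen_summationDomain : IsOpen summationDomain :=
  (isOpen_lt continuous_const (by fun_prop : Continuous fun p : ℂ × ℂ => p.2.re)).inter
    (isOpen_lt (by fun_prop) (by fun_prop : Continuous fun p : ℂ × ℂ => p.1.re))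

theorem differentiableAt_besselProduct (hμ : 0 < μ.re) {s : ℝ} (hs : 0 < s) {p : ℂ × ℂ}
    (hp : p ∈ summationDomain) : DifferentiableAt ℂ (besselProduct μ s) p := by
  obtain ⟨hb, hab⟩ := hp
  have hsub : 0 < (s * (p.1 - p.2) : ℂ).re := by
    rw [Complex.re_ofReal_mul, Complex.sub_re]
    exact mul_pos hs (sub_pos.mpr hab)
  have hadd : 0 < (s * (p.1 + p.2) : ℂ).re := by
    rw [Complex.re_ofReal_mul, Complex.add_re]
    exact mul_pos hs (by linarith)
  exact ((differentiableAt_besselI hμ hsub).comp p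
      (f := fun p : ℂ × ℂ => s * (p.1 - p.2)) (by fun_prop)).mul
    ((hasDerivAt_besselK μ hadd).differentiableAt.comp p
      (f := fun p : ℂ × ℂ => s * (p.1 + p.2)) (by fun_prop))

theorem differentiableAt_shiftedLaplaceTerm (k : ℕ) (μ : ℂ) {x : ℝ} (hx : 0 ≤ x) {p : ℂ × ℂ}
    (hp : p ∈ summationDomain) : DifferentiableAt ℂ (shiftedLaplaceTerm k μ x) p := by
  obtain ⟨hb, hab⟩ := hp
  have ha := hb.trans hab
  have hA : DifferentiableAt ℂ (fun p : ℂ × ℂ => csqrt (x + p.1 ^ 2)) p :=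
    (differentiableAt_csqrt_ofReal_add_sq hx ha).comp p differentiableAt_fst
  have hB : DifferentiableAt ℂ (fun p : ℂ × ℂ => csqrt (x + p.2 ^ 2)) p :=
    (differentiableAt_csqrt_ofReal_add_sq hx hb).comp p differentiableAt_snd
  have hA0 := ha.trans_le (re_le_re_csqrt hx p.1)
  have hB0 := hb.trans_le (re_le_re_csqrt hx p.2)
  have hAB0 : 0 < (csqrt (x + p.1 ^ 2) + csqrt (x + p.2 ^ 2)).re := by
    rw [Complex.add_re]
    positivity
  have hw : DifferentiableAt ℂ (fun p : ℂ × ℂ => (csqrt (x + p.1 ^ 2) - csqrt (x + p.2 ^ 2)) /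
      (csqrt (x + p.1 ^ 2) + csqrt (x + p.2 ^ 2))) p := by
    fun_prop (disch := exact Complex.ne_zero_of_re_pos hAB0)
  have hA1 := Complex.ne_zero_of_re_pos hA0
  have hB1 := Complex.ne_zero_of_re_pos hB0
  have hcpow := hw.cpow_const (c := μ) (sub_div_add_csqrt_mem_slitPlane hx hb hab)
  have hhyp := (differentiable_hyp2F1_neg_natCast k (μ - k) (μ + 1) _).comp p (hw.fun_pow 2)
  unfold shiftedLaplaceTerm laplaceTerm
  fun_prop (disch := first | assumption | exact mul_ne_zero hA1 hB1)

theorem exists_norm_besselProduct_le (hμ : 0 < μ.re) (R : ℝ) (hδ : 0 < δ) :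
    ∃ C : ℝ, 0 ≤ C ∧ ∀ (s : ℝ) (p : ℂ × ℂ), 1 ≤ s → p ∈ summationDomain → ‖p‖ ≤ R → δ ≤ p.2.re →
      ‖besselProduct μ s p‖ ≤ C * (s ^ μ.re * Real.exp (-(2 * δ * s))) := by
  obtain ⟨C₁, hC₁, hI⟩ := exists_norm_besselI_le hμ
  obtain ⟨C₂, hC₂, hK⟩ := exists_norm_besselK_le μ hδ
  refine ⟨C₁ * C₂ * |R + R| ^ μ.re, by positivity, fun s p hs hp hpR hpδ => ?_⟩
  obtain ⟨-, hab⟩ := hp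
  have hs0 : 0 < s := by linarith
  have hsub : (s * (p.1 - p.2) : ℂ).re = s * (p.1.re - p.2.re) := by
    rw [Complex.re_ofReal_mul, Complex.sub_re]
  have hadd : (s * (p.1 + p.2) : ℂ).re = s * (p.1.re + p.2.re) := by
    rw [Complex.re_ofReal_mul, Complex.add_re]
  have hnorm : ‖(s * (p.1 - p.2) : ℂ)‖ ≤ s * |R + R| := by
    rw [norm_mul, Complex.norm_real, Real.norm_of_nonneg hs0.le]
    gcongr
    exact ((norm_sub_le _ _).trans (add_le_add ((norm_fst_le p).trans hpR)
      ((norm_snd_le p).trans hpR))).trans (le_abs_self _)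
  have hI' := hI (s * (p.1 - p.2)) (hsub ▸ mul_pos hs0 (sub_pos.mpr hab))
  have hK' := hK (s * (p.1 + p.2)) (hadd ▸ by nlinarith)
  rw [hsub] at hI'
  rw [hadd] at hK'
  rw [besselProduct, norm_mul]
  calc ‖besselI μ (s * (p.1 - p.2))‖ * ‖besselK μ (s * (p.1 + p.2))‖
      ≤ C₁ * ‖(s * (p.1 - p.2) : ℂ)‖ ^ μ.re * Real.exp (s * (p.1.re - p.2.re)) *
        (C₂ * Real.exp (-(s * (p.1.re + p.2.re)))) := by gcongr
    _ = C₁ * C₂ * ‖(s * (p.1 - p.2) : ℂ)‖ ^ μ.re * Real.exp (-(2 * p.2.re * s)) := by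
        rw [show -(2 * p.2.re * s) = s * (p.1.re - p.2.re) + -(s * (p.1.re + p.2.re)) by ring,
          Real.exp_add]
        ring
    _ ≤ C₁ * C₂ * (s * |R + R|) ^ μ.re * Real.exp (-(2 * δ * s)) := by gcongr
    _ = C₁ * C₂ * |R + R| ^ μ.re * (s ^ μ.re * Real.exp (-(2 * δ * s))) := by
        rw [Real.mul_rpow hs0.le (abs_nonneg _)]
        ring

theorem exists_norm_laplaceTerm_le (k : ℕ) (hμ : 0 ≤ μ.re) (hρ : 0 ≤ ρ) :
    ∃ C : ℝ, 0 ≤ C ∧ ∀ (m : ℝ) (A B : ℂ), 0 < m → m ≤ ‖A‖ → m ≤ ‖B‖ → ‖(A - B) / (A + B)‖ ≤ ρ →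
      ‖laplaceTerm k μ A B‖ ≤ C / (m ^ 2) ^ (k + 1) := by
  obtain ⟨K, hK, hF⟩ := exists_norm_hyp2F1_neg_natCast_le k (μ - k) (μ + 1) (ρ ^ 2)
  refine ⟨Real.exp (π * |μ.im|) * ρ ^ μ.re * 2 ^ (2 * k) * K, by positivity,
    fun m A B hm hA hB hAB => ?_⟩
  have hcpow : ‖((A - B) / (A + B)) ^ μ‖ ≤ Real.exp (π * |μ.im|) * ρ ^ μ.re :=
    (norm_cpow_le_exp_mul_rpow _ μ).trans (by gcongr)
  have hprod : ‖1 / (A * B)‖ ≤ 1 / (m * m) := by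
    rw [norm_div, norm_one, norm_mul]
    gcongr
  have hinv : ‖1 / A + 1 / B‖ ≤ 1 / m + 1 / m := by
    refine (norm_add_le _ _).trans ?_
    rw [norm_div, norm_div, norm_one]
    gcongr
  have hhyp := hF (((A - B) / (A + B)) ^ 2) (by
    rw [norm_pow]
    gcongr)
  rw [laplaceTerm, norm_mul, norm_mul, norm_mul, norm_pow]
  calc ‖1 / (A * B)‖ * ‖((A - B) / (A + B)) ^ μ‖ * ‖1 / A + 1 / B‖ ^ (2 * k) *
        ‖hyp2F1 (μ - k) (-k) (μ + 1) (((A - B) / (A + B)) ^ 2)‖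
      ≤ 1 / (m * m) * (Real.exp (π * |μ.im|) * ρ ^ μ.re) * (1 / m + 1 / m) ^ (2 * k) * K := by
        gcongr
    _ = Real.exp (π * |μ.im|) * ρ ^ μ.re * 2 ^ (2 * k) * K / (m ^ 2) ^ (k + 1) := by
        rw [← add_div, one_add_one_eq_two, div_pow, ← pow_mul, mul_add, pow_add, mul_one]
        field_simp

theorem exists_norm_shiftedLaplaceTerm_le (k : ℕ) (hμ : 0 ≤ μ.re) (R : ℝ) (hδ : 0 < δ) :
    ∃ C : ℝ, 0 ≤ C ∧ ∀ (x : ℝ) (p : ℂ × ℂ), 0 < x → ‖p‖ ≤ R → δ ≤ p.1.re → δ ≤ p.2.re →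
      ‖shiftedLaplaceTerm k μ x p‖ ≤ C / x ^ (k + 1) := by
  obtain ⟨C, hC, hterm⟩ := exists_norm_laplaceTerm_le k hμ
    (by positivity : 0 ≤ (R ^ 2 + R ^ 2) / (δ + δ) ^ 2)
  refine ⟨C / (δ ^ 2 / (R ^ 2 + δ ^ 2)) ^ (k + 1), by positivity, fun x p hx hpR ha hb => ?_⟩
  have haR := (norm_fst_le p).trans hpR
  have hbR := (norm_snd_le p).trans hpR
  have hm : 0 ≤ δ ^ 2 / (R ^ 2 + δ ^ 2) * x := by positivity
  have hlow {a : ℂ} (ha : δ ≤ a.re) (haR : ‖a‖ ≤ R) :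
      √(δ ^ 2 / (R ^ 2 + δ ^ 2) * x) ≤ ‖csqrt (x + a ^ 2)‖ := by
    rw [Real.sqrt_le_left (norm_nonneg _), ← norm_pow, csqrt_sq]
    exact mul_le_norm_ofReal_add_sq hx.le hδ ha haR
  have hle := hterm _ _ _ (by positivity) (hlow ha haR) (hlow hb hbR)
    (norm_sub_div_add_csqrt_le hx.le hδ ha hb haR hbR)
  rwa [Real.sq_sqrt hm, mul_pow, ← div_div] at hle

end SummationDomain

section Continuation

theorem rpow_mul_exp_neg_le {s b σ : ℝ} (hs : 1 ≤ s) (hb : 0 < b) {j : ℕ} (hσ : σ ≤ j) (k : ℕ) :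
    s ^ σ * Real.exp (-(b * s)) ≤ (j + 2 * k)! / b ^ (j + 2 * k) / (s ^ 2) ^ k := by
  calc s ^ σ * Real.exp (-(b * s))
      ≤ s ^ (j : ℝ) * ((j + 2 * k)! / (b * s) ^ (j + 2 * k)) := by
        gcongr
        exact exp_neg_le_factorial_div_pow (by positivity) _
    _ = (j + 2 * k)! / b ^ (j + 2 * k) / (s ^ 2) ^ k := by
        rw [Real.rpow_natCast, mul_pow, ← pow_mul, pow_add s]
        field_simp

theorem exists_norm_besselProduct_pi_mul_sqrt_le {μ : ℂ} {δ : ℝ} (hμ : 0 < μ.re) (k : ℕ) (R : ℝ)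
    (hδ : 0 < δ) :
    ∃ C : ℝ, ∀ (n : ℕ), ∀ p ∈ summationDomain, ‖p‖ ≤ R → δ ≤ p.2.re →
      ‖besselProduct μ (π * √(n + 1)) p‖ ≤ C / ((n : ℝ) + 1) ^ k := by
  obtain ⟨C, hC, hbound⟩ := exists_norm_besselProduct_le hμ R hδ
  obtain ⟨j, hj⟩ := exists_nat_ge μ.re
  refine ⟨C * ((j + 2 * k)! / (2 * δ) ^ (j + 2 * k)), fun n p hp hpR hpδ => ?_⟩
  have hpi : 1 ≤ π := by linarith [Real.pi_gt_three]
  have hs : 1 ≤ π * √((n : ℝ) + 1) :=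
    one_le_mul_of_one_le_of_one_le hpi (Real.one_le_sqrt.mpr (by simp))
  have hsq : (n : ℝ) + 1 ≤ (π * √((n : ℝ) + 1)) ^ 2 := by
    rw [mul_pow, Real.sq_sqrt (by positivity)]
    exact le_mul_of_one_le_left (by positivity) (one_le_pow₀ hpi)
  calc ‖besselProduct μ (π * √(n + 1)) p‖
      ≤ C * ((j + 2 * k)! / (2 * δ) ^ (j + 2 * k) / ((π * √((n : ℝ) + 1)) ^ 2) ^ k) :=
        (hbound _ p hs hp hpR hpδ).trans (by
          gcongr
          exact rpow_mul_exp_neg_le hs (by positivity) hj k)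
    _ ≤ C * ((j + 2 * k)! / (2 * δ) ^ (j + 2 * k) / ((n : ℝ) + 1) ^ k) := by gcongr
    _ = C * ((j + 2 * k)! / (2 * δ) ^ (j + 2 * k)) / ((n : ℝ) + 1) ^ k := by ring

theorem exists_norm_shiftedLaplaceTerm_four_mul_le {μ : ℂ} {δ : ℝ} (hμ : 0 ≤ μ.re) (k : ℕ) (R : ℝ)
    (hδ : 0 < δ) :
    ∃ C : ℝ, ∀ (n : ℕ), ∀ p ∈ summationDomain, ‖p‖ ≤ R → δ ≤ p.2.re →
      ‖shiftedLaplaceTerm k μ (4 * (n + 1)) p‖ ≤ C / ((n : ℝ) + 1) ^ k := by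
  obtain ⟨C, hC, hbound⟩ := exists_norm_shiftedLaplaceTerm_le k hμ R hδ
  refine ⟨C, fun n p hp hpR hpδ => ?_⟩
  have hn : (1 : ℝ) ≤ n + 1 := by simp
  calc ‖shiftedLaplaceTerm k μ (4 * (n + 1)) p‖
      ≤ C / (4 * ((n : ℝ) + 1)) ^ (k + 1) :=
        hbound _ p (by positivity) hpR (hpδ.trans hp.2.le) hpδ
    _ ≤ C / (1 * ((n : ℝ) + 1)) ^ (k + 1) := by
        gcongr
        norm_num
    _ ≤ C / ((n : ℝ) + 1) ^ k := by
        rw [one_mul]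
        gcongr
        exact k.le_succ

theorem IsModularSequence.differentiableOn_tsum_comp {k : ℕ} {ε : ℂ} {c : ℕ → ℂ}
    (hc : IsModularSequence k ε c) {T : ℕ → ℂ × ℂ → ℂ}
    (hT : ∀ n, ∀ p ∈ summationDomain, DifferentiableAt ℂ (T n) p)
    (hbound : ∀ R δ : ℝ, 0 < δ → ∃ C : ℝ, ∀ n, ∀ p ∈ summationDomain, ‖p‖ ≤ R → δ ≤ p.2.re →
      ‖T n p‖ ≤ C / ((n : ℝ) + 1) ^ k)
    {γ : ℂ → ℂ × ℂ} (hγ : Differentiable ℂ γ) :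
    DifferentiableOn ℂ (fun z => ∑' n, c (n + 1) * T n (γ z)) (γ ⁻¹' summationDomain) := by
  intro z hz
  obtain ⟨C, hC⟩ := hbound (‖γ z‖ + 1) ((γ z).2.re / 2) (half_pos hz.1)
  have hγc := hγ.continuous
  let V : Set ℂ := γ ⁻¹' summationDomain ∩
    ({w | ‖γ w‖ < ‖γ z‖ + 1} ∩ {w | (γ z).2.re / 2 < (γ w).2.re})
  have hVo : IsOpen V := (isOpen_summationDomain.preimage hγc).inter
    ((isOpen_lt (by fun_prop) (by fun_prop)).inter (isOpen_lt (by fun_prop) (by fun_prop)))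
  have hzV : z ∈ V := ⟨hz, by simp, by simpa using half_lt_self hz.1⟩
  refine ((Complex.differentiableOn_tsum_of_summable_norm (hc.summable_norm_mul_div C) ?_ hVo
    ?_).differentiableAt (hVo.mem_nhds hzV)).differentiableWithinAt
  · rintro n w ⟨hw, -⟩
    exact (((hT n _ hw).comp w hγ.differentiableAt).const_mul _).differentiableWithinAt
  · rintro n w ⟨hw, hwR, hwδ⟩
    rw [norm_mul]
    gcongr
    exact hC n _ hw (le_of_lt hwR) (le_of_lt hwδ)

theorem eqOn_of_eventually_ofReal_eq {F G : ℂ → ℂ} {U : Set ℂ} (hU : IsOpen U)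
    (hUc : IsPreconnected U) (hF : DifferentiableOn ℂ F U) (hG : DifferentiableOn ℂ G U) {x : ℝ}
    (hx : (x : ℂ) ∈ U) (h : ∀ᶠ y : ℝ in 𝓝 x, F y = G y) : EqOn F G U := by
  refine (hF.analyticOnNhd hU).eqOn_of_preconnected_of_frequently_eq (hG.analyticOnNhd hU) hUc hx ?_
  have hne : Tendsto ((↑) : ℝ → ℂ) (𝓝[≠] x) (𝓝[≠] (x : ℂ)) :=
    tendsto_nhdsWithin_iff.mpr ⟨Complex.continuous_ofReal.continuousAt.mono_left nhdsWithin_le_nhds,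
      eventually_mem_nhdsWithin.mono fun y hy => by simpa using hy⟩
  exact hne.frequently (h.filter_mono nhdsWithin_le_nhds).frequently

theorem eqOn_summationDomain {F G : ℂ × ℂ → ℂ}
    (hF : ∀ γ : ℂ → ℂ × ℂ, Differentiable ℂ γ →
      DifferentiableOn ℂ (fun z => F (γ z)) (γ ⁻¹' summationDomain))
    (hG : ∀ γ : ℂ → ℂ × ℂ, Differentiable ℂ γ →
      DifferentiableOn ℂ (fun z => G (γ z)) (γ ⁻¹' summationDomain))
    (h : ∀ a b : ℝ, b < a → a < 2 * b → F (a, b) = G (a, b)) :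
    EqOn F G summationDomain := by
  have hfst {b : ℝ} (hb : 0 < b) {a : ℂ} (ha : b < a.re) : F (a, b) = G (a, b) := by
    have hγ : Differentiable ℂ fun z : ℂ => (z, (b : ℂ)) := by fun_prop
    have hpre : (fun z : ℂ => (z, (b : ℂ))) ⁻¹' summationDomain = {z : ℂ | b < z.re} := by
      ext z
      simp [summationDomain, hb]
    refine eqOn_of_eventually_ofReal_eq (x := 3 / 2 * b)
      (isOpen_lt continuous_const Complex.continuous_re) (convex_halfSpace_re_gt b).isPreconnected
      (hpre ▸ hF _ hγ) (hpre ▸ hG _ hγ) ?_ ?_ ha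
    · rw [mem_ofPred_eq, Complex.ofReal_re]
      linarith
    · filter_upwards [Ioo_mem_nhds (by linarith : b < 3 / 2 * b)
        (by linarith : 3 / 2 * b < 2 * b)] with x hx using h x b hx.1 hx.2
  rintro ⟨a, b⟩ hab
  have hγ : Differentiable ℂ fun z : ℂ => (a, z) := by fun_prop
  refine eqOn_of_eventually_ofReal_eq (x := b.re) (U := (fun z : ℂ => (a, z)) ⁻¹' summationDomain)
    (isOpen_summationDomain.preimage hγ.continuous)
    ((convex_halfSpace_re_gt 0).inter (convex_halfSpace_re_lt a.re)).isPreconnected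
    (hF _ hγ) (hG _ hγ) (by simpa [summationDomain] using hab) ?_ hab
  filter_upwards [Ioo_mem_nhds hab.1 hab.2] with y hy using hfst hy.1 hy.2

theorem tsum_besselProduct_eq {k : ℕ} {ε : ℂ} {c : ℕ → ℂ} (hc : IsModularSequence k ε c) {μ : ℂ}
    (hμ : 0 < μ.re) {p : ℂ × ℂ} (hp : p ∈ summationDomain) :
    ∑' n : ℕ, c (n + 1) * besselProduct μ (π * √(n + 1)) p =
      ε * (2 / (2 * π) ^ (k + 1) * (Complex.Gamma (μ + k + 1) / Complex.Gamma (μ + 1))) *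
        ∑' n : ℕ, c (n + 1) * shiftedLaplaceTerm k μ (4 * (n + 1)) p := by
  refine eqOn_summationDomain
    (F := fun p => ∑' n : ℕ, c (n + 1) * besselProduct μ (π * √(n + 1)) p)
    (G := fun p => ε * (2 / (2 * π) ^ (k + 1) *
      (Complex.Gamma (μ + k + 1) / Complex.Gamma (μ + 1))) *
        ∑' n : ℕ, c (n + 1) * shiftedLaplaceTerm k μ (4 * (n + 1)) p)
    (fun γ hγ => hc.differentiableOn_tsum_comp
      (fun n p hp => differentiableAt_besselProduct hμ (by positivity) hp)
      (fun R δ hδ => exists_norm_besselProduct_pi_mul_sqrt_le hμ k R hδ) hγ)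
    (fun γ hγ => (hc.differentiableOn_tsum_comp
      (fun n p hp => differentiableAt_shiftedLaplaceTerm k μ (by positivity) hp)
      (fun R δ hδ => exists_norm_shiftedLaplaceTerm_four_mul_le hμ.le k R hδ) hγ).const_mul _)
    (fun a b hba hab => ?_) hp
  have hcsqrt (n : ℕ) (t : ℝ) :
      csqrt ((4 * (n + 1) : ℝ) + (t : ℂ) ^ 2) = (√(4 * (n + 1) + t ^ 2) : ℝ) := by
    rw [← csqrt_ofReal (by positivity), Complex.ofReal_add _ (t ^ 2), Complex.ofReal_pow]
  simpa only [besselProduct, shiftedLaplaceTerm, hcsqrt] using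
    tsum_besselI_mul_besselK_ofReal hc hμ hba hab

end Continuation

theorem stmt7_general {k : ℕ} {ε : ℂ} {c : ℕ → ℂ} (hc : IsModularSequence k ε c) (ν α β : ℂ)
    (hν : -1 < ν.re) (hαβ : (csqrt β).re < (csqrt α).re) (hβ : 0 < (csqrt β).re) :
    ∑' n : ℕ, c (n + 1) *
        besselI (ν + 1) ((π : ℂ) * csqrt ((n : ℂ) + 1) * (csqrt α - csqrt β)) *
        besselK (ν + 1) ((π : ℂ) * csqrt ((n : ℂ) + 1) * (csqrt α + csqrt β))
      = ε * (2 / (2 * (π : ℂ)) ^ (k + 1) * Complex.Gamma (ν + k + 2) / Complex.Gamma (ν + 2)) *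
        ∑' n : ℕ, c (n + 1) /
            (csqrt (4 * ((n : ℂ) + 1) + α) * csqrt (4 * ((n : ℂ) + 1) + β)) *
          ((csqrt (4 * ((n : ℂ) + 1) + α) - csqrt (4 * ((n : ℂ) + 1) + β)) /
            (csqrt (4 * ((n : ℂ) + 1) + α) + csqrt (4 * ((n : ℂ) + 1) + β))) ^ (ν + 1) *
          (1 / csqrt (4 * ((n : ℂ) + 1) + α) + 1 / csqrt (4 * ((n : ℂ) + 1) + β)) ^ (2 * k) *
          hyp2F1 (ν + 1 - k) (-k) (ν + 2)
            (((csqrt (4 * ((n : ℂ) + 1) + α) - csqrt (4 * ((n : ℂ) + 1) + β)) /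
              (csqrt (4 * ((n : ℂ) + 1) + α) + csqrt (4 * ((n : ℂ) + 1) + β))) ^ 2) := by
  have hsum := tsum_besselProduct_eq hc (μ := ν + 1) (p := (csqrt α, csqrt β))
    (by rw [Complex.add_re, Complex.one_re]; linarith) ⟨hβ, hαβ⟩
  have hsqrt (n : ℕ) : ((π * √(n + 1) : ℝ) : ℂ) = π * csqrt (n + 1) := by
    rw [Complex.ofReal_mul, ← csqrt_ofReal (by positivity)]
    push_cast
    rfl
  have hcast (n : ℕ) : ((4 * ((n : ℝ) + 1) : ℝ) : ℂ) = 4 * ((n : ℂ) + 1) := by push_cast; rfl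
  simp only [besselProduct, shiftedLaplaceTerm, laplaceTerm, csqrt_sq, hsqrt, hcast] at hsum
  rw [show ν + k + 2 = ν + 1 + k + 1 by ring, show ν + 2 = ν + 1 + 1 by ring, mul_div_assoc]
  simpa only [mul_assoc, div_eq_mul_one_div (c _)] using hsum

theorem stmt7 (τ : ℕ → ℂ) (hτ : IsRamanujanTau τ) (ν α β : ℂ) (hν : -1 < ν.re)
    (hαβ : (csqrt β).re < (csqrt α).re) (hβ : 0 < (csqrt β).re) :
    ∑' n : ℕ, τ (n + 1) *
        besselI (ν + 1) ((π : ℂ) * csqrt ((n : ℂ) + 1) * (csqrt α - csqrt β)) *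
        besselK (ν + 1) ((π : ℂ) * csqrt ((n : ℂ) + 1) * (csqrt α + csqrt β))
      = 2 / (2 * (π : ℂ)) ^ 12 * Complex.Gamma (ν + 13) / Complex.Gamma (ν + 2) *
        ∑' n : ℕ, τ (n + 1) /
            (csqrt (4 * ((n : ℂ) + 1) + α) * csqrt (4 * ((n : ℂ) + 1) + β)) *
          ((csqrt (4 * ((n : ℂ) + 1) + α) - csqrt (4 * ((n : ℂ) + 1) + β)) /
            (csqrt (4 * ((n : ℂ) + 1) + α) + csqrt (4 * ((n : ℂ) + 1) + β))) ^ (ν + 1) *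
          (1 / csqrt (4 * ((n : ℂ) + 1) + α) + 1 / csqrt (4 * ((n : ℂ) + 1) + β)) ^ 22 *
          hyp2F1 (ν - 10) (-11) (ν + 2)
            (((csqrt (4 * ((n : ℂ) + 1) + α) - csqrt (4 * ((n : ℂ) + 1) + β)) /
              (csqrt (4 * ((n : ℂ) + 1) + α) + csqrt (4 * ((n : ℂ) + 1) + β))) ^ 2) := by
  have h13 : ν + 13 = ν + (11 : ℕ) + 2 := by
    push_cast
    ring
  have h10 : ν - 10 = ν + 1 - (11 : ℕ) := by
    push_cast
    ring
  simpa only [h13, h10, one_mul, Nat.cast_ofNat] using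
    stmt7_general hτ.isModularSequence ν α β hν hαβ hβ
end

section
/- For every s ∈ ℂ with Re(s) > 0, Σ_{n=1}^∞ τ(n) e^{−s√n} = 2^{36} π^{23/2} Γ(25/2) Σ_{n=1}^∞ s·τ(n)/(s² + 16π²n)^{25/2}. -/
open scoped Real

/-!
For a cusp form of level one and weight `k`, the transformation `z ↦ -1 / z` on the imaginary axis
reads `∑ aₙ exp(-n / (4t)) = (8πit)ᵏ ∑ aₙ exp(-16π²nt)`. Put `t = x²`, multiply by `exp(-s²x²)` with
`s > 0` and integrate termwise over `x > 0`: the Cauchy–Schlömilch substitution turns the left-hand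
side into `∑ aₙ √π / (2s) exp(-s√n)`, and the Gamma integral turns the right-hand side into a
multiple of `∑ aₙ (s² + 16π²n)^(-(k + 1/2))`. Both sides of the resulting identity are holomorphic
in the half-plane `Re s > 0`, so it extends from the positive reals. The series of the theorem is
the case of the discriminant form, `k = 12`.
-/

open Set MeasureTheory Filter Topology Asymptotics

section CauchySchlomilch

/-- The inverse of the bijection `x ↦ a * x - b / x` from `(0, ∞)` to `ℝ`, where `0 < a` and
`0 < b`: the positive root `x` of `a * x ^ 2 - y * x - b`. It is the substitution that evaluates
integrals over `(0, ∞)` of functions of `a * x - b / x`. -/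
noncomputable def mulSubDivInv (a b y : ℝ) : ℝ := (y + √(y ^ 2 + 4 * a * b)) / (2 * a)

variable {a b : ℝ}

theorem mulSubDivInv_pos (ha : 0 < a) (hb : 0 < b) (y : ℝ) : 0 < mulSubDivInv a b y := by
  have h : |y| < √(y ^ 2 + 4 * a * b) := by
    rw [← Real.sqrt_sq_eq_abs]
    exact Real.sqrt_lt_sqrt (sq_nonneg _) (lt_add_of_pos_right _ (by positivity))
  exact div_pos (by linarith [neg_abs_le y]) (by positivity)

theorem mul_mulSubDivInv_sub_div (ha : 0 < a) (hb : 0 < b) (y : ℝ) :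
    a * mulSubDivInv a b y - b / mulSubDivInv a b y = y := by
  have hpos := mulSubDivInv_pos ha hb y
  have hsq : √(y ^ 2 + 4 * a * b) ^ 2 = y ^ 2 + 4 * a * b := Real.sq_sqrt (by positivity)
  have hroot : a * mulSubDivInv a b y ^ 2 - b = y * mulSubDivInv a b y := by
    rw [mulSubDivInv]
    field_simp
    rw [← mul_comm 4 a]
    linear_combination hsq
  rw [sub_eq_iff_eq_add, ← sub_eq_iff_eq_add']
  field_simp
  linear_combination hroot

theorem mulSubDivInv_mul_sub_div (ha : 0 < a) (hb : 0 < b) {x : ℝ} (hx : 0 < x) :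
    mulSubDivInv a b (a * x - b / x) = x := by
  have hsq : (a * x - b / x) ^ 2 + 4 * a * b = (a * x + b / x) ^ 2 := by
    field_simp
    ring
  rw [mulSubDivInv, hsq, Real.sqrt_sq (by positivity)]
  field_simp
  ring

theorem mulSubDivInv_injective (ha : 0 < a) (hb : 0 < b) :
    Function.Injective (mulSubDivInv a b) :=
  Function.LeftInverse.injective (g := fun x => a * x - b / x) (mul_mulSubDivInv_sub_div ha hb)

theorem range_mulSubDivInv (ha : 0 < a) (hb : 0 < b) : range (mulSubDivInv a b) = Ioi 0 :=
  Subset.antisymm (range_subset_iff.2 (mulSubDivInv_pos ha hb))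
    fun _ hx => ⟨_, mulSubDivInv_mul_sub_div ha hb hx⟩

theorem hasDerivAt_mulSubDivInv (ha : 0 < a) (hb : 0 < b) (y : ℝ) :
    HasDerivAt (mulSubDivInv a b) ((1 + y / √(y ^ 2 + 4 * a * b)) / (2 * a)) y := by
  have hrad : y ^ 2 + 4 * a * b ≠ 0 := by positivity
  have hsqrt := ((hasDerivAt_pow 2 y).add_const (4 * a * b)).sqrt hrad
  refine (((hasDerivAt_id y).add hsqrt).div_const (2 * a)).congr_deriv ?_
  rw [Nat.cast_ofNat, pow_one, mul_div_mul_left _ _ two_ne_zero]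

theorem abs_div_sqrt_sq_add_le_one {c : ℝ} (hc : 0 ≤ c) (y : ℝ) : |y / √(y ^ 2 + c)| ≤ 1 := by
  rw [abs_div, abs_of_nonneg (Real.sqrt_nonneg _), ← Real.sqrt_sq_eq_abs]
  exact div_le_one_of_le₀ (Real.sqrt_le_sqrt (by linarith)) (Real.sqrt_nonneg _)

variable {E : Type*} [NormedAddCommGroup E] [NormedSpace ℝ E] {f : ℝ → E}

theorem integral_eq_zero_of_odd {G : Type*} [AddGroup G] [MeasurableSpace G] [MeasurableNeg G]
    {μ : Measure G} [μ.IsNegInvariant] {f : G → E} (hf : Function.Odd f) : ∫ x, f x ∂μ = 0 := by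
  have := IsAddTorsionFree.of_isTorsionFree ℝ E
  have h := integral_neg_eq_self f μ
  simp only [hf _, integral_neg] at h
  exact self_eq_neg.1 h.symm

theorem integrable_div_sqrt_sq_add_smul {c : ℝ} (hc : 0 ≤ c) (hf : Integrable f) :
    Integrable fun y => (y / √(y ^ 2 + c)) • f y :=
  hf.bdd_smul 1 (Measurable.aestronglyMeasurable (by fun_prop))
    (Eventually.of_forall (abs_div_sqrt_sq_add_le_one hc))

theorem abs_deriv_mulSubDivInv_smul (ha : 0 < a) (hb : 0 < b) (y : ℝ) :
    |(1 + y / √(y ^ 2 + 4 * a * b)) / (2 * a)| •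
        f (a * mulSubDivInv a b y - b / mulSubDivInv a b y) =
      (2 * a)⁻¹ • (f y + (y / √(y ^ 2 + 4 * a * b)) • f y) := by
  have hle := neg_le_of_abs_le (abs_div_sqrt_sq_add_le_one (c := 4 * a * b) (by positivity) y)
  rw [mul_mulSubDivInv_sub_div ha hb, abs_of_nonneg (div_nonneg (by linarith) (by positivity)),
    div_eq_inv_mul, mul_smul, add_smul, one_smul]

theorem integrableOn_comp_mul_sub_div (ha : 0 < a) (hb : 0 < b) (hf : Integrable f) :
    IntegrableOn (fun x => f (a * x - b / x)) (Ioi 0) := by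
  rw [← range_mulSubDivInv ha hb, ← image_univ,
    integrableOn_image_iff_integrableOn_abs_deriv_smul MeasurableSet.univ
      (fun y _ => (hasDerivAt_mulSubDivInv ha hb y).hasDerivWithinAt)
      (mulSubDivInv_injective ha hb).injOn, integrableOn_univ]
  simp only [abs_deriv_mulSubDivInv_smul ha hb]
  exact (hf.add (integrable_div_sqrt_sq_add_smul (by positivity) hf)).smul _

/-- The **Cauchy–Schlömilch substitution**. -/
theorem integral_comp_mul_sub_div_of_even (ha : 0 < a) (hb : 0 < b) (hf : Integrable f)
    (heven : Function.Even f) :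
    ∫ x in Ioi (0 : ℝ), f (a * x - b / x) = (2 * a)⁻¹ • ∫ x, f x := by
  have hodd : ∫ y, (y / √(y ^ 2 + 4 * a * b)) • f y = 0 :=
    integral_eq_zero_of_odd fun y => by rw [heven y, neg_sq, neg_div, neg_smul]
  rw [← range_mulSubDivInv ha hb, ← image_univ,
    integral_image_eq_integral_abs_deriv_smul MeasurableSet.univ
      (fun y _ => (hasDerivAt_mulSubDivInv ha hb y).hasDerivWithinAt)
      (mulSubDivInv_injective ha hb).injOn, setIntegral_univ]
  simp only [abs_deriv_mulSubDivInv_smul ha hb]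
  rw [integral_smul, integral_add hf (integrable_div_sqrt_sq_add_smul (by positivity) hf), hodd,
    add_zero]

end CauchySchlomilch

section Integrals

variable {s c : ℝ}

theorem exp_neg_sq_mul_sq_add_div_sq_eq (hc : 0 ≤ c) {x : ℝ} (hx : x ≠ 0) :
    Real.exp (-(s ^ 2 * x ^ 2 + c / (4 * x ^ 2))) =
      Real.exp (-(s * √c)) * Real.exp (-(s * x - √c / 2 / x) ^ 2) := by
  rw [← Real.exp_add, ← Real.sq_sqrt hc, Real.sqrt_sq (Real.sqrt_nonneg c)]
  congr 1
  field_simp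
  ring

theorem integrableOn_exp_neg_sq_mul_sq_add_div_sq (hs : 0 < s) (hc : 0 < c) :
    IntegrableOn (fun x : ℝ => Real.exp (-(s ^ 2 * x ^ 2 + c / (4 * x ^ 2)))) (Ioi 0) := by
  have hgauss : Integrable fun x : ℝ => Real.exp (-x ^ 2) := by
    simpa using integrable_exp_neg_mul_sq one_pos
  have hcomp := integrableOn_comp_mul_sub_div hs (half_pos (Real.sqrt_pos.2 hc)) hgauss
  exact IntegrableOn.congr_fun (hcomp.const_mul _)
    (fun x hx => (exp_neg_sq_mul_sq_add_div_sq_eq hc.le (ne_of_gt hx)).symm) measurableSet_Ioi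

theorem integral_exp_neg_sq_mul_sq_add_div_sq (hs : 0 < s) (hc : 0 < c) :
    ∫ x in Ioi (0 : ℝ), Real.exp (-(s ^ 2 * x ^ 2 + c / (4 * x ^ 2))) =
      √π / (2 * s) * Real.exp (-(s * √c)) := by
  have hgauss : Integrable fun x : ℝ => Real.exp (-x ^ 2) := by
    simpa using integrable_exp_neg_mul_sq one_pos
  have hval : ∫ x : ℝ, Real.exp (-x ^ 2) = √π := by simpa using integral_gaussian 1
  rw [setIntegral_congr_fun measurableSet_Ioi
      fun x hx => exp_neg_sq_mul_sq_add_div_sq_eq hc.le (ne_of_gt hx), integral_const_mul,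
    integral_comp_mul_sub_div_of_even hs (half_pos (Real.sqrt_pos.2 hc)) hgauss fun x => by simp,
    hval, smul_eq_mul]
  ring

theorem integral_rpow_two_mul_mul_exp_neg_mul_sq {k : ℝ} (hk : -(1 / 2) < k) (hc : 0 < c) :
    ∫ x in Ioi (0 : ℝ), x ^ (2 * k) * Real.exp (-c * x ^ 2) =
      c ^ (-(k + 1 / 2)) / 2 * Real.Gamma (k + 1 / 2) := by
  have h := integral_rpow_mul_exp_neg_mul_rpow two_pos (q := 2 * k) (by linarith) hc
  rw [show -(2 * k + 1) / 2 = -(k + 1 / 2) by ring, show (2 * k + 1) / 2 = k + 1 / 2 by ring,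
    mul_one_div] at h
  exact_mod_cast h

theorem integral_tsum_mul_ofReal_of_nonneg {α ι : Type*} [MeasurableSpace α] [Countable ι]
    {μ : Measure α} {c : ι → ℂ} {f : ι → α → ℝ} (hf : ∀ i, Integrable (f i) μ)
    (hpos : ∀ i, 0 ≤ᵐ[μ] f i) (hsum : Summable fun i => ‖c i‖ * ∫ x, f i x ∂μ) :
    ∫ x, ∑' i, c i * (f i x : ℂ) ∂μ = ∑' i, c i * ((∫ x, f i x ∂μ : ℝ) : ℂ) := by
  have hnorm (i : ι) : ∫ x, ‖c i * (f i x : ℂ)‖ ∂μ = ‖c i‖ * ∫ x, f i x ∂μ := by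
    rw [← integral_const_mul]
    refine integral_congr_ae ((hpos i).mono fun x hx => ?_)
    simp only [norm_mul, Complex.norm_real, Real.norm_of_nonneg hx]
  have h := integral_tsum_of_summable_integral_norm (F := fun i x => c i * (f i x : ℂ))
    (fun i => (hf i).ofReal.const_mul (c i)) (by simpa only [hnorm] using hsum)
  simpa only [integral_const_mul, integral_complex_ofReal] using h.symm

end Integrals

section RightHalfPlane

theorem abs_re_mul_abs_le (s : ℂ) (r : ℝ) : |s.re| * |r| ≤ 2 * ‖s‖ * ‖s + r * Complex.I‖ := by
  have hre : |s.re| ≤ ‖s + r * Complex.I‖ := by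
    simpa using Complex.abs_re_le_norm (s + r * Complex.I)
  have hr : |r| ≤ ‖s + r * Complex.I‖ + ‖s‖ := by
    simpa using norm_sub_le (s + r * Complex.I) s
  calc |s.re| * |r| ≤ |s.re| * (‖s + r * Complex.I‖ + ‖s‖) := by gcongr
    _ = |s.re| * ‖s + r * Complex.I‖ + |s.re| * ‖s‖ := mul_add _ _ _
    _ ≤ ‖s‖ * ‖s + r * Complex.I‖ + ‖s + r * Complex.I‖ * ‖s‖ := by
      gcongr
      exact Complex.abs_re_le_norm s
    _ = 2 * ‖s‖ * ‖s + r * Complex.I‖ := by ring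

theorem re_sq_mul_le_norm_sq_add (s : ℂ) {c : ℝ} (hc : 0 ≤ c) :
    s.re ^ 2 * c ≤ (2 * ‖s‖) ^ 2 * ‖s ^ 2 + c‖ := by
  have hfactor : s ^ 2 + c = (s + (√c : ℝ) * Complex.I) * (s + (-√c : ℝ) * Complex.I) := by
    have hsqrt : ((√c : ℝ) : ℂ) ^ 2 = c := mod_cast Real.sq_sqrt hc
    push_cast
    linear_combination -hsqrt + ((√c : ℝ) : ℂ) ^ 2 * Complex.I_sq
  calc s.re ^ 2 * c = (|s.re| * |√c|) * (|s.re| * |-√c|) := by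
        rw [abs_neg, mul_mul_mul_comm, abs_mul_abs_self, abs_mul_abs_self,
          Real.mul_self_sqrt hc, sq]
    _ ≤ (2 * ‖s‖ * ‖s + (√c : ℝ) * Complex.I‖) * (2 * ‖s‖ * ‖s + (-√c : ℝ) * Complex.I‖) :=
      mul_le_mul (abs_re_mul_abs_le _ _) (abs_re_mul_abs_le _ _) (by positivity) (by positivity)
    _ = (2 * ‖s‖) ^ 2 * ‖s ^ 2 + c‖ := by
      rw [hfactor, norm_mul]
      ring

theorem norm_sq_add_rpow_neg_le {s : ℂ} (hs : 0 < s.re) {c p : ℝ} (hc : 0 < c) (hp : 0 ≤ p) :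
    ‖s ^ 2 + c‖ ^ (-p) ≤ ((2 * ‖s‖ / s.re) ^ 2) ^ p * c ^ (-p) := by
  have hnorm : 0 < ‖s‖ := norm_pos_iff.2 fun h => by simp [h] at hs
  have hle : c ≤ (2 * ‖s‖ / s.re) ^ 2 * ‖s ^ 2 + c‖ := by
    rw [div_pow, div_mul_eq_mul_div, le_div_iff₀ (by positivity), mul_comm c]
    exact re_sq_mul_le_norm_sq_add s hc.le
  have hpos : 0 < ‖s ^ 2 + c‖ := pos_of_mul_pos_right (hc.trans_le hle) (by positivity)
  have hrpow := Real.rpow_le_rpow hc.le hle hp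
  rw [Real.mul_rpow (by positivity) hpos.le] at hrpow
  rw [Real.rpow_neg hpos.le, Real.rpow_neg hc.le, ← div_eq_mul_inv, le_div_iff₀ (by positivity),
    inv_mul_le_iff₀ (by positivity), mul_comm]
  exact hrpow

theorem sq_add_mem_slitPlane {s : ℂ} (hs : 0 < s.re) {c : ℝ} (hc : 0 < c) :
    s ^ 2 + c ∈ Complex.slitPlane := by
  have hre : (s ^ 2 + c).re = s.re ^ 2 - s.im ^ 2 + c := by simp [sq]
  have him : (s ^ 2 + c).im = 2 * (s.re * s.im) := by simp [sq]; ring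
  rw [Complex.mem_slitPlane_iff, hre, him]
  by_cases h : s.im = 0
  · left
    rw [h, zero_pow two_ne_zero, sub_zero]
    positivity
  · right
    exact mul_ne_zero two_ne_zero (mul_ne_zero hs.ne' h)

theorem isOpen_setOf_re_pos : IsOpen {s : ℂ | 0 < s.re} :=
  isOpen_lt continuous_const Complex.continuous_re

variable {ι : Type*} {a : ι → ℂ} {r : ι → ℝ} {p : ℝ}

theorem differentiableOn_tsum_mul_exp_neg_mul (hr : ∀ i, 0 ≤ r i)
    (ha : ∀ ε > 0, Summable fun i => ‖a i‖ * Real.exp (-(ε * r i))) :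
    DifferentiableOn ℂ (fun s => ∑' i, a i * Complex.exp (-s * r i)) {s | 0 < s.re} := by
  refine (SummableLocallyUniformlyOn_of_locally_bounded isOpen_setOf_re_pos
    fun K hKpos hK => ?_).differentiableOn isOpen_setOf_re_pos fun i s _ => by fun_prop
  obtain rfl | hne := K.eq_empty_or_nonempty
  · exact ⟨0, summable_zero, by simp⟩
  obtain ⟨s₀, hs₀, hmin⟩ := hK.exists_isMinOn hne Complex.continuous_re.continuousOn
  refine ⟨_, ha s₀.re (hKpos hs₀), fun i s hs => ?_⟩
  have hle : s₀.re * r i ≤ s.re * r i := mul_le_mul_of_nonneg_right (hmin hs) (hr i)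
  rw [norm_mul, Complex.norm_exp, Complex.re_mul_ofReal, Complex.neg_re, neg_mul]
  gcongr

theorem differentiableOn_tsum_mul_div_sq_add_cpow (hr : ∀ i, 0 < r i) (hp : 0 ≤ p)
    (ha : Summable fun i => ‖a i‖ * r i ^ (-p)) :
    DifferentiableOn ℂ (fun s => ∑' i, s * a i / (s ^ 2 + r i) ^ (p : ℂ)) {s | 0 < s.re} := by
  refine (SummableLocallyUniformlyOn_of_locally_bounded isOpen_setOf_re_pos
    fun K hKpos hK => ?_).differentiableOn isOpen_setOf_re_pos fun i s hs => ?_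
  · have hcont : ContinuousOn (fun s : ℂ => ‖s‖ * ((2 * ‖s‖ / s.re) ^ 2) ^ p) K :=
      continuous_norm.continuousOn.mul <| ((ContinuousOn.div (by fun_prop) (by fun_prop)
        fun s hs => (hKpos hs).ne').pow 2).rpow_const fun _ _ => Or.inr hp
    obtain ⟨C, hC⟩ := hK.bddAbove_image hcont
    refine ⟨_, ha.mul_left C, fun i s hs => ?_⟩
    rw [norm_div, norm_mul, Complex.norm_cpow_real, div_eq_mul_inv,
      ← Real.rpow_neg (norm_nonneg _)]
    calc ‖s‖ * ‖a i‖ * ‖s ^ 2 + r i‖ ^ (-p)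
        ≤ ‖s‖ * ‖a i‖ * (((2 * ‖s‖ / s.re) ^ 2) ^ p * r i ^ (-p)) := by
          gcongr
          exact norm_sq_add_rpow_neg_le (hKpos hs) (hr i) hp
      _ = ‖s‖ * ((2 * ‖s‖ / s.re) ^ 2) ^ p * (‖a i‖ * r i ^ (-p)) := by ring
      _ ≤ C * (‖a i‖ * r i ^ (-p)) := by
          have := (hr i).le
          gcongr
          exact hC (mem_image_of_mem _ hs)
  · have hmem := sq_add_mem_slitPlane hs (hr i)
    have hne : (s ^ 2 + r i) ^ (p : ℂ) ≠ 0 := fun h =>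
      Complex.slitPlane_ne_zero hmem (Complex.cpow_eq_zero_iff _ _ |>.1 h).1
    exact (differentiableAt_id.mul_const _).div
      (((differentiableAt_id.pow 2).add_const _).cpow_const hmem) hne

theorem eqOn_re_pos_of_eq_ofReal {f g : ℂ → ℂ} (hf : DifferentiableOn ℂ f {s | 0 < s.re})
    (hg : DifferentiableOn ℂ g {s | 0 < s.re}) (h : ∀ t : ℝ, 0 < t → f t = g t) :
    EqOn f g {s | 0 < s.re} := by
  refine (hf.analyticOnNhd isOpen_setOf_re_pos).eqOn_of_preconnected_of_frequently_eq
    (hg.analyticOnNhd isOpen_setOf_re_pos) (convex_halfSpace_re_gt 0).isPreconnected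
    (z₀ := ((1 : ℝ) : ℂ)) (by simp) ?_
  have ht : Tendsto (fun t : ℝ => (t : ℂ)) (𝓝[≠] 1) (𝓝[≠] ((1 : ℝ) : ℂ)) :=
    Complex.continuous_ofReal.continuousWithinAt.tendsto_nhdsWithin
      fun _ => Complex.ofReal_injective.ne
  refine ht.frequently (Eventually.frequently ?_)
  filter_upwards [nhdsWithin_le_nhds (lt_mem_nhds one_pos)] with t ht using h t ht

end RightHalfPlane

section Theta

variable {ι : Type*} {a b : ι → ℂ} {l m : ι → ℝ} {k : ℝ}

theorem tsum_mul_exp_neg_sq_mul_sq_add_div_sq_of_theta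
    (htheta : ∀ t : ℝ, 0 < t → ∑' i, a i * (Real.exp (-(l i / (4 * t))) : ℝ) =
      (t ^ k : ℝ) * ∑' i, b i * (Real.exp (-(m i * t)) : ℝ)) (s : ℝ) {x : ℝ} (hx : 0 < x) :
    ∑' i, a i * (Real.exp (-(s ^ 2 * x ^ 2 + l i / (4 * x ^ 2))) : ℝ) =
      ∑' i, b i * (x ^ (2 * k) * Real.exp (-(s ^ 2 + m i) * x ^ 2) : ℝ) := by
  have h := congrArg (((Real.exp (-(s ^ 2 * x ^ 2)) : ℝ) : ℂ) * ·) (htheta (x ^ 2) (by positivity))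
  simp only [← tsum_mul_left] at h
  refine (tsum_congr fun i => ?_).trans (h.trans (tsum_congr fun i => ?_))
  · rw [neg_add, Real.exp_add, Complex.ofReal_mul, mul_left_comm]
  · rw [← Real.rpow_natCast_mul hx.le, Nat.cast_ofNat,
      show -(s ^ 2 + m i) * x ^ 2 = -(s ^ 2 * x ^ 2) + -(m i * x ^ 2) by ring, Real.exp_add]
    push_cast
    ring

variable [Countable ι]

theorem tsum_mul_exp_neg_mul_sqrt_of_theta_of_pos (hk : -(1 / 2) < k) (hl : ∀ i, 0 < l i)
    (hm : ∀ i, 0 < m i) (ha : ∀ ε > 0, Summable fun i => ‖a i‖ * Real.exp (-(ε * √(l i))))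
    (hb : Summable fun i => ‖b i‖ * m i ^ (-(k + 1 / 2)))
    (htheta : ∀ t : ℝ, 0 < t → ∑' i, a i * (Real.exp (-(l i / (4 * t))) : ℝ) =
      (t ^ k : ℝ) * ∑' i, b i * (Real.exp (-(m i * t)) : ℝ)) {s : ℝ} (hs : 0 < s) :
    ∑' i, a i * (√π / (2 * s) * Real.exp (-(s * √(l i))) : ℝ) =
      ∑' i, b i * ((s ^ 2 + m i) ^ (-(k + 1 / 2)) / 2 * Real.Gamma (k + 1 / 2) : ℝ) := by
  have hc (i : ι) : 0 < s ^ 2 + m i := add_pos (by positivity) (hm i)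
  have hΓ : 0 < Real.Gamma (k + 1 / 2) := Real.Gamma_pos_of_pos (by linarith)
  have hint (i : ι) : IntegrableOn
      (fun x : ℝ => x ^ (2 * k) * Real.exp (-(s ^ 2 + m i) * x ^ 2)) (Ioi 0) :=
    (integrable_rpow_mul_exp_neg_mul_sq (hc i) (by linarith)).integrableOn
  have hleft := integral_tsum_mul_ofReal_of_nonneg (c := a)
    (fun i => integrableOn_exp_neg_sq_mul_sq_add_div_sq hs (hl i))
    (fun i => Eventually.of_forall fun x => (Real.exp_pos _).le) (by
      simp only [integral_exp_neg_sq_mul_sq_add_div_sq hs (hl _)]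
      exact ((ha s hs).mul_left (√π / (2 * s))).congr fun i => by ring)
  have hright := integral_tsum_mul_ofReal_of_nonneg (c := b) hint
    (fun i => (ae_restrict_mem measurableSet_Ioi).mono fun x hx =>
      mul_nonneg (Real.rpow_nonneg (le_of_lt hx) _) (Real.exp_pos _).le) (by
      simp only [integral_rpow_two_mul_mul_exp_neg_mul_sq hk (hc _)]
      refine (hb.mul_right (1 / 2 * Real.Gamma (k + 1 / 2))).of_nonneg_of_le
        (fun i => by have := hc i; positivity) fun i => ?_
      have hle : (s ^ 2 + m i) ^ (-(k + 1 / 2)) ≤ m i ^ (-(k + 1 / 2)) :=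
        Real.rpow_le_rpow_of_nonpos (hm i) (by linarith [sq_nonneg s]) (by linarith)
      calc ‖b i‖ * ((s ^ 2 + m i) ^ (-(k + 1 / 2)) / 2 * Real.Gamma (k + 1 / 2))
          ≤ ‖b i‖ * (m i ^ (-(k + 1 / 2)) / 2 * Real.Gamma (k + 1 / 2)) := by gcongr
        _ = ‖b i‖ * m i ^ (-(k + 1 / 2)) * (1 / 2 * Real.Gamma (k + 1 / 2)) := by ring)
  simp only [integral_exp_neg_sq_mul_sq_add_div_sq hs (hl _)] at hleft
  simp only [integral_rpow_two_mul_mul_exp_neg_mul_sq hk (hc _)] at hright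
  rw [← hleft, ← hright]
  exact setIntegral_congr_fun measurableSet_Ioi fun x hx =>
    tsum_mul_exp_neg_sq_mul_sq_add_div_sq_of_theta htheta s hx

theorem tsum_mul_exp_neg_mul_sqrt_of_theta_of_re_pos (hk : -(1 / 2) < k) (hl : ∀ i, 0 < l i)
    (hm : ∀ i, 0 < m i) (ha : ∀ ε > 0, Summable fun i => ‖a i‖ * Real.exp (-(ε * √(l i))))
    (hb : Summable fun i => ‖b i‖ * m i ^ (-(k + 1 / 2)))
    (htheta : ∀ t : ℝ, 0 < t → ∑' i, a i * (Real.exp (-(l i / (4 * t))) : ℝ) =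
      (t ^ k : ℝ) * ∑' i, b i * (Real.exp (-(m i * t)) : ℝ)) {s : ℂ} (hs : 0 < s.re) :
    ∑' i, a i * Complex.exp (-s * (√(l i) : ℝ)) = (Real.Gamma (k + 1 / 2) / √π : ℝ) *
      ∑' i, s * b i / (s ^ 2 + m i) ^ ((k + 1 / 2 : ℝ) : ℂ) := by
  refine eqOn_re_pos_of_eq_ofReal
    (f := fun s => ∑' i, a i * Complex.exp (-s * (√(l i) : ℝ)))
    (differentiableOn_tsum_mul_exp_neg_mul (fun i => Real.sqrt_nonneg _) ha)
    ((differentiableOn_tsum_mul_div_sq_add_cpow hm (by linarith) hb).const_mul _)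
    (fun t ht => ?_) hs
  have h := congrArg (((2 * t / √π : ℝ) : ℂ) * ·)
    (tsum_mul_exp_neg_mul_sqrt_of_theta_of_pos hk hl hm ha hb htheta ht)
  simp only [← tsum_mul_left] at h ⊢
  refine (tsum_congr fun i => ?_).trans (h.trans (tsum_congr fun i => ?_))
  · rw [mul_left_comm, ← Complex.ofReal_mul, ← mul_assoc, div_mul_div_cancel₀ (by positivity),
      div_self (by positivity), one_mul]
    push_cast
    rw [neg_mul]
  · have hpos : 0 < t ^ 2 + m i := add_pos (by positivity) (hm i)
    have hcpow : ((t : ℂ) ^ 2 + m i) ^ ((k + 1 / 2 : ℝ) : ℂ) =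
        ((t ^ 2 + m i) ^ (k + 1 / 2) : ℝ) := by
      rw [Complex.ofReal_cpow hpos.le]
      push_cast
      rfl
    rw [hcpow, Real.rpow_neg hpos.le]
    push_cast
    ring

end Theta

section Summability

variable {c : ℕ → ℂ} {r : ℝ}

theorem summable_norm_mul_exp_neg_mul_sqrt_of_isBigO
    (hc : c =O[atTop] fun n : ℕ => ((n : ℝ) + 1) ^ r) {ε : ℝ} (hε : 0 < ε) :
    Summable fun n : ℕ => ‖c n‖ * Real.exp (-(ε * √((n : ℝ) + 1))) := by
  have hsqrt : Tendsto (fun n : ℕ => √((n : ℝ) + 1)) atTop atTop :=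
    Real.tendsto_sqrt_atTop.comp
      (tendsto_atTop_add_const_right _ 1 tendsto_natCast_atTop_atTop)
  have hexp : (fun n : ℕ => Real.exp (-(ε * √((n : ℝ) + 1)))) =O[atTop]
      fun n : ℕ => ((n : ℝ) + 1) ^ (-(r + 2)) := by
    refine ((isLittleO_exp_neg_mul_rpow_atTop hε (2 * -(r + 2))).isBigO.comp_tendsto hsqrt).congr
      (fun n => ?_) fun n => ?_
    · simp only [Function.comp_apply, neg_mul]
    · rw [Function.comp_apply, Real.rpow_mul (Real.sqrt_nonneg _), Real.rpow_two,
        Real.sq_sqrt (by positivity)]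
  refine summable_of_isBigO_nat ((summable_nat_add_iff 1).2 (Real.summable_nat_rpow.2
    (show (-2 : ℝ) < -1 by norm_num))) ((hc.norm_left.mul hexp).congr_right fun n => ?_)
  rw [← Real.rpow_add (by positivity)]
  push_cast
  ring_nf

theorem summable_norm_mul_rpow_neg_of_isBigO
    (hc : c =O[atTop] fun n : ℕ => ((n : ℝ) + 1) ^ r) {p : ℝ} (hp : r + 1 < p) :
    Summable fun n : ℕ => ‖c n‖ * ((n : ℝ) + 1) ^ (-p) := by
  refine summable_of_isBigO_nat ((summable_nat_add_iff 1).2 (Real.summable_nat_rpow.2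
    (show r - p < -1 by linarith)))
    ((hc.norm_left.mul (isBigO_refl _ _)).congr_right fun n => ?_)
  rw [← Real.rpow_add (by positivity)]
  push_cast
  ring_nf

end Summability

theorem csqrt_natCast_add_one (n : ℕ) : csqrt ((n : ℂ) + 1) = (√((n : ℝ) + 1) : ℝ) := by
  rw [csqrt, Real.sqrt_eq_rpow, Complex.ofReal_cpow (by positivity)]
  push_cast
  rfl

theorem ofReal_cpow_sub_one_half {x : ℝ} (hx : 0 < x) (k : ℤ) :
    (x : ℂ) ^ ((k : ℂ) - 1 / 2) = x ^ k / (√x : ℝ) := by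
  rw [Complex.cpow_sub _ _ (mod_cast hx.ne'), Complex.cpow_intCast, Real.sqrt_eq_rpow,
    Complex.ofReal_cpow hx.le]
  push_cast
  rfl

section CuspForm

open UpperHalfPlane
open scoped MatrixGroups

variable {k : ℤ} (f : CuspForm 𝒮ℒ k)

theorem hasSum_qExpansion_coeff_succ (z : ℍ) :
    HasSum (fun n : ℕ => (qExpansion 1 f).coeff (n + 1) * Function.Periodic.qParam 1 z ^ (n + 1))
      (f z) := by
  have h := (hasSum_nat_add_iff' 1).2
    (ModularForm.hasSum_qExpansion f one_pos one_mem_strictPeriods_SL z)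
  simpa only [smul_eq_mul, Finset.sum_range_one,
    CuspFormClass.qExpansion_coeff_zero f one_pos one_mem_strictPeriods_SL, zero_mul, sub_zero]
    using h

theorem tsum_qExpansion_coeff_succ_mul_exp {z : ℍ} {y : ℝ} (hz : (z : ℂ) = y * Complex.I) :
    ∑' n : ℕ, (qExpansion 1 f).coeff (n + 1) * (Real.exp (-(2 * π * ((n : ℝ) + 1) * y)) : ℝ) =
      f z := by
  rw [← (hasSum_qExpansion_coeff_succ f z).tsum_eq]
  refine tsum_congr fun n => ?_
  rw [Function.Periodic.qParam, ← Complex.exp_nat_mul, hz, Complex.ofReal_exp]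
  congr 2
  push_cast
  linear_combination -(2 * π * ((n : ℂ) + 1) * y) * Complex.I_sq

theorem apply_S_smul (z : ℍ) : f (ModularGroup.S • z) = (z : ℂ) ^ k * f z := by
  rw [← ModularGroup.denom_S]
  exact SlashInvariantForm.slash_action_eqn'' f (MonoidHom.mem_range.2 ⟨_, rfl⟩) z

theorem tsum_qExpansion_coeff_succ_mul_exp_div {y : ℝ} (hy : 0 < y) :
    ∑' n : ℕ, (qExpansion 1 f).coeff (n + 1) * (Real.exp (-(2 * π * ((n : ℝ) + 1) * y⁻¹)) : ℝ) =
      (y * Complex.I) ^ k * ∑' n : ℕ,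
        (qExpansion 1 f).coeff (n + 1) * (Real.exp (-(2 * π * ((n : ℝ) + 1) * y)) : ℝ) := by
  let z : ℍ := ⟨y * Complex.I, by simpa using hy⟩
  have hSz : ((ModularGroup.S • z : ℍ) : ℂ) = (y⁻¹ : ℝ) * Complex.I := by
    rw [modular_S_smul]
    simp [z, mul_comm]
  rw [tsum_qExpansion_coeff_succ_mul_exp f hSz, apply_S_smul,
    tsum_qExpansion_coeff_succ_mul_exp f (z := z) rfl]

theorem tsum_qExpansion_coeff_succ_theta {t : ℝ} (ht : 0 < t) :
    ∑' n : ℕ, (qExpansion 1 f).coeff (n + 1) * (Real.exp (-(((n : ℝ) + 1) / (4 * t))) : ℝ) =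
      (t ^ (k : ℝ) : ℝ) * ∑' n : ℕ, ((8 * π * Complex.I) ^ k * (qExpansion 1 f).coeff (n + 1)) *
        (Real.exp (-(16 * π ^ 2 * ((n : ℝ) + 1) * t)) : ℝ) := by
  have hleft (n : ℕ) : ((n : ℝ) + 1) / (4 * t) = 2 * π * ((n : ℝ) + 1) * (8 * π * t)⁻¹ := by
    field_simp
    norm_num
  have hright (n : ℕ) : 16 * π ^ 2 * ((n : ℝ) + 1) * t = 2 * π * ((n : ℝ) + 1) * (8 * π * t) := by
    ring
  have hfactor : (t : ℂ) ^ k * (8 * π * Complex.I) ^ k = ((8 * π * t : ℝ) * Complex.I) ^ k := by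
    rw [← mul_zpow]
    push_cast
    ring_nf
  simp only [hleft, hright, mul_assoc ((8 * π * Complex.I) ^ k), tsum_mul_left]
  rw [← mul_assoc, Real.rpow_intCast, Complex.ofReal_zpow, hfactor,
    tsum_qExpansion_coeff_succ_mul_exp_div f (by positivity)]

theorem qExpansion_coeff_succ_isBigO :
    (fun n : ℕ => (qExpansion 1 f).coeff (n + 1)) =O[atTop]
      fun n : ℕ => ((n : ℝ) + 1) ^ ((k : ℝ) / 2) := by
  have h := CuspFormClass.qExpansion_isBigO f
  rw [Subgroup.strictWidthInfty_SL2Z] at h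
  exact (h.comp_tendsto (tendsto_add_atTop_nat 1)).congr_right fun n => by
    rw [Function.comp_apply, Nat.cast_add_one]

theorem stmt9_general (hk : 1 < k) {s : ℂ} (hs : 0 < s.re) :
    ∑' n : ℕ, (qExpansion 1 f).coeff (n + 1) * Complex.exp (-s * csqrt ((n : ℂ) + 1)) =
      (8 * Complex.I) ^ k * (π : ℂ) ^ ((k : ℂ) - 1 / 2) * Complex.Gamma ((k : ℂ) + 1 / 2) *
        ∑' n : ℕ, s * (qExpansion 1 f).coeff (n + 1) /
          (s ^ 2 + 16 * (π : ℂ) ^ 2 * ((n : ℂ) + 1)) ^ ((k : ℂ) + 1 / 2) := by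
  have hkR : (1 : ℝ) < k := mod_cast hk
  have hbigO := qExpansion_coeff_succ_isBigO f
  have hsum : Summable fun n : ℕ => ‖(8 * π * Complex.I) ^ k * (qExpansion 1 f).coeff (n + 1)‖ *
      (16 * π ^ 2 * ((n : ℝ) + 1)) ^ (-((k : ℝ) + 1 / 2)) := by
    have h := summable_norm_mul_rpow_neg_of_isBigO hbigO
      (show (k : ℝ) / 2 + 1 < k + 1 / 2 by linarith)
    refine (h.mul_left (‖(8 * π * Complex.I) ^ k‖ * (16 * π ^ 2) ^ (-((k : ℝ) + 1 / 2)))).congr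
      fun n => ?_
    rw [norm_mul, Real.mul_rpow (x := 16 * π ^ 2) (by positivity) (by positivity)]
    ring
  have h := tsum_mul_exp_neg_mul_sqrt_of_theta_of_re_pos (by linarith) (fun n => by positivity)
    (fun n => by positivity) (fun ε => summable_norm_mul_exp_neg_mul_sqrt_of_isBigO hbigO) hsum
    (fun t => tsum_qExpansion_coeff_succ_theta f) hs
  simp only [csqrt_natCast_add_one]
  rw [h, ofReal_cpow_sub_one_half Real.pi_pos, ← tsum_mul_left, ← tsum_mul_left]
  refine tsum_congr fun n => ?_
  rw [Complex.ofReal_div, ← Complex.Gamma_ofReal, mul_right_comm 8, mul_zpow _ (π : ℂ)]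
  push_cast
  ring

end CuspForm

section RamanujanTau

open UpperHalfPlane

variable {τ : ℕ → ℂ}

theorem IsRamanujanTau.hasSum_discriminant_s9 (hτ : IsRamanujanTau τ) (z : ℍ) :
    HasSum (fun n : ℕ => τ (n + 1) * Function.Periodic.qParam 1 z ^ (n + 1))
      (ModularForm.discriminant z) := by
  have hz : ‖Function.Periodic.qParam 1 (z : ℂ)‖ < 1 := by
    simpa using UpperHalfPlane.norm_qParam_lt_one 1 z
  have h := hτ _ hz
  rw [← ModularForm.discriminant_eq_q_prod] at h
  have hs : Summable fun n : ℕ => τ (n + 1) * Function.Periodic.qParam 1 z ^ (n + 1) := by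
    by_contra hs
    rw [tsum_eq_zero_of_not_summable hs] at h
    exact ModularForm.discriminant_ne_zero z h.symm
  exact h ▸ hs.hasSum

theorem IsRamanujanTau.apply_succ (hτ : IsRamanujanTau τ) (n : ℕ) :
    τ (n + 1) = (qExpansion 1 CuspForm.discriminant).coeff (n + 1) := by
  have h := ModularFormClass.qExpansion_coeff_unique (c := fun m => if m = 0 then 0 else τ m)
    (f := CuspForm.discriminant) one_pos one_mem_strictPeriods_SL (fun z => by
      rw [← hasSum_nat_add_iff' 1]
      simpa using hτ.hasSum_discriminant_s9 z) (n + 1)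
  simpa using h

end RamanujanTau

theorem stmt9 (τ : ℕ → ℂ) (hτ : IsRamanujanTau τ) (s : ℂ) (hs : 0 < s.re) :
    ∑' n : ℕ, τ (n + 1) * Complex.exp (-s * csqrt ((n : ℂ) + 1))
      = 2 ^ 36 * (π : ℂ) ^ ((23 : ℂ)/2) * Complex.Gamma (25/2) *
        ∑' n : ℕ, s * τ (n + 1) / (s^2 + 16 * (π : ℂ)^2 * ((n : ℂ) + 1)) ^ ((25 : ℂ)/2) := by
  have hfactor : (8 * Complex.I) ^ (12 : ℤ) = 2 ^ 36 := by
    rw [zpow_ofNat, mul_pow, Complex.I_pow_eq_pow_mod]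
    norm_num
  have hsub : ((12 : ℤ) : ℂ) - 1 / 2 = 23 / 2 := by norm_num
  have hadd : ((12 : ℤ) : ℂ) + 1 / 2 = 25 / 2 := by norm_num
  simpa only [hτ.apply_succ, hfactor, hsub, hadd] using
    stmt9_general CuspForm.discriminant (by norm_num) hs
end
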